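/- Let X be a set, H a Hilbert space, A ⊆ B(H) a non-degenerate C*-algebra, and φ : X×X → CB(A, B(H)) a bounded function. Then φ is a Schur A-multiplier if and only if there exist a Hilbert space K, a non-degenerate *-representation ρ : A → B(K), and bounded functions V, W : X → B(H,K) such that φ(x,y)(a) = V(x)* ρ(a) W(y) for all x,y ∈ X and a ∈ A. Moreover, if φ is a Schur A-multiplier then V and W can be chosen so that ||φ||_m = sup_{x∈X} ||V(x)|| · sup_{y∈X} ||W(y)||. -/

import Mathlib

noncomputable section

open scoped ComplexOrder
open Matrix
open scoped ENNReal

/-- Positivity of a matrix over a (possibly non-unital) C*-algebra: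
`M` is positive iff it factors as `Nᴴ * N`. -/
def MatPos {R : Type*} [NonUnitalSemiring R] [StarRing R] {ν : Type*} [Fintype ν]
    (M : Matrix ν ν R) : Prop :=
  ∃ N : Matrix ν ν R, M = Nᴴ * N

/-- A linear map between C*-algebras is completely positive if all its matrix
amplifications preserve positivity. -/
def IsCompletelyPositive {R S : Type*} [NonUnitalSemiring R] [StarRing R] [Module ℂ R]
    [NonUnitalSemiring S] [StarRing S] [Module ℂ S] (Φ : R →ₗ[ℂ] S) : Prop :=
  ∀ (n : ℕ) (M : Matrix (Fin n) (Fin n) R), MatPos M → MatPos (M.map Φ)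

variable {H : Type*} [NormedAddCommGroup H] [InnerProductSpace ℂ H] [CompleteSpace H]

/-- The bounded operator on the Hilbert space `H ⊕₂ ⋯ ⊕₂ H` associated to an
operator-valued `n × n` matrix. -/
def matOp {ν : Type*} [Fintype ν] (M : Matrix ν ν (H →L[ℂ] H)) :
    PiLp 2 (fun _ : ν => H) →L[ℂ] PiLp 2 (fun _ : ν => H) :=
  ((PiLp.continuousLinearEquiv 2 ℂ (fun _ : ν => H)).symm :
      (∀ _ : ν, H) →L[ℂ] PiLp 2 (fun _ : ν => H)) ∘L
    (ContinuousLinearMap.pi fun i =>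
      (∑ j, (M i j) ∘L (ContinuousLinearMap.proj j)) ∘L
        ((PiLp.continuousLinearEquiv 2 ℂ (fun _ : ν => H)) :
          PiLp 2 (fun _ : ν => H) →L[ℂ] ∀ _ : ν, H))

variable {H : Type*} [NormedAddCommGroup H] [InnerProductSpace ℂ H] [CompleteSpace H]
variable {X : Type*}

/-- Evaluation at a point, as a continuous linear map `ℓ²(X,H) → H`. -/
def lpEval (x : X) : lp (fun _ : X => H) 2 →L[ℂ] H :=
  LinearMap.mkContinuous
    { toFun := fun f => f x
      map_add' := fun f g => by
        have := lp.coeFn_add f g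
        exact congrFun this x
      map_smul' := fun c f => by
        have := lp.coeFn_smul c f
        exact congrFun this x }
    1 (fun f => by
      simpa using lp.norm_apply_le_norm (by norm_num) f x)

/-- Inclusion of the `x`-th coordinate, as a continuous linear map `H → ℓ²(X,H)`. -/
def lpSingle (x : X) : H →L[ℂ] lp (fun _ : X => H) 2 := by
  classical
  exact LinearMap.mkContinuous
    { toFun := fun ξ => lp.single 2 x ξ
      map_add' := fun ξ η => by
        apply lp.ext
        funext j
        by_cases h : j = x
        · subst h; simp [lp.single_apply_self]
        · simp [lp.single_apply_ne _ _ _ h, lp.coeFn_add]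
      map_smul' := fun c ξ => by simp [lp.single_smul] }
    1 (fun ξ => by
      simpa using (lp.norm_single (p := 2) (by norm_num)
        (fun _ : X => ξ) x).le)

/-- The elementary operator `e_{x,y} ⊗ T` on `ℓ²(X,H)`. -/
def elemOp (x y : X) (T : H →L[ℂ] H) :
    lp (fun _ : X => H) 2 →L[ℂ] lp (fun _ : X => H) 2 :=
  (lpSingle x) ∘L T ∘L (lpEval y)

/-- The operator `T_k` on `ℓ²(X,H)` associated with a finitely supported kernel
`k : X × X → B(H)`; it is (defined to be) `0` if `k` is not finitely supported. -/
def TOp (k : X × X → (H →L[ℂ] H)) :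
    lp (fun _ : X => H) 2 →L[ℂ] lp (fun _ : X => H) 2 :=
  ∑ᶠ (p : X × X), elemOp p.1 p.2 (k p)

variable {G : Type*} [Group G]

/-- The left regular translation `λ_t` on `ℓ²(G,H)`. -/
def lam (t : G) : lp (fun _ : G => H) 2 →L[ℂ] lp (fun _ : G => H) 2 :=
  LinearMap.mkContinuous
    { toFun := fun f =>
        ⟨fun s => f (t⁻¹ * s), by
          apply memℓp_gen
          have hf : Summable fun s => ‖f s‖ ^ (2 : ℝ≥0∞).toReal :=
            (lp.memℓp f).summable (by norm_num)
          exact ((Equiv.mulLeft t⁻¹).summable_iff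
            (f := fun s => ‖f s‖ ^ (2 : ℝ≥0∞).toReal)).2 hf⟩
      map_add' := fun f g => by
        apply lp.ext; funext s
        exact congrFun (lp.coeFn_add f g) (t⁻¹ * s)
      map_smul' := fun c f => by
        apply lp.ext; funext s
        exact congrFun (lp.coeFn_smul c f) (t⁻¹ * s) }
    1 (fun f => by
      rw [one_mul]
      refine lp.norm_le_of_tsum_le (by norm_num) (norm_nonneg f) ?_
      have h1 : ∑' (s : G), ‖f (t⁻¹ * s)‖ ^ (2 : ℝ≥0∞).toReal
          = ∑' (s : G), ‖f s‖ ^ (2 : ℝ≥0∞).toReal :=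
        (Equiv.mulLeft t⁻¹).tsum_eq (fun s => ‖f s‖ ^ (2 : ℝ≥0∞).toReal)
      show ∑' (s : G), ‖f (t⁻¹ * s)‖ ^ (2 : ℝ≥0∞).toReal ≤ ‖f‖ ^ (2 : ℝ≥0∞).toReal
      rw [h1, ← lp.norm_rpow_eq_tsum (by norm_num) f])

/-- The diagonal ("block multiplication") operator on `ℓ²(X,H)` associated with a
uniformly bounded family of operators. -/
def diagOp (T : X → (H →L[ℂ] H)) (C : ℝ) (hC : ∀ x, ‖T x‖ ≤ C) :
    lp (fun _ : X => H) 2 →L[ℂ] lp (fun _ : X => H) 2 := by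
  have hC' : ∀ x, ‖T x‖ ≤ max C 0 := fun x => (hC x).trans (le_max_left _ _)
  have hr : (0:ℝ) < (2 : ℝ≥0∞).toReal := by norm_num
  have key : ∀ (f : lp (fun _ : X => H) 2) (x : X),
      ‖T x (f x)‖ ^ (2 : ℝ≥0∞).toReal
        ≤ (max C 0) ^ (2 : ℝ≥0∞).toReal * ‖f x‖ ^ (2 : ℝ≥0∞).toReal := by
    intro f x
    have h1 : ‖T x (f x)‖ ≤ max C 0 * ‖f x‖ :=
      ((T x).le_opNorm (f x)).trans
        (mul_le_mul_of_nonneg_right (hC' x) (norm_nonneg _))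
    calc ‖T x (f x)‖ ^ (2 : ℝ≥0∞).toReal
        ≤ (max C 0 * ‖f x‖) ^ (2 : ℝ≥0∞).toReal :=
          Real.rpow_le_rpow (norm_nonneg _) h1 hr.le
      _ = (max C 0) ^ (2 : ℝ≥0∞).toReal * ‖f x‖ ^ (2 : ℝ≥0∞).toReal :=
          Real.mul_rpow (le_max_right _ _) (norm_nonneg _)
  have mem : ∀ f : lp (fun _ : X => H) 2, Memℓp (fun x => T x (f x)) 2 := by
    intro f
    apply memℓp_gen
    exact Summable.of_nonneg_of_le
      (fun x => Real.rpow_nonneg (norm_nonneg _) _) (key f)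
      (((lp.memℓp f).summable hr).mul_left _)
  exact LinearMap.mkContinuous
    { toFun := fun f => ⟨fun x => T x (f x), mem f⟩
      map_add' := fun f g => by
        apply lp.ext; funext x
        have := congrFun (lp.coeFn_add f g) x
        show T x ((f + g) x) = _
        rw [this]
        exact map_add (T x) (f x) (g x)
      map_smul' := fun c f => by
        apply lp.ext; funext x
        have := congrFun (lp.coeFn_smul c f) x
        show T x ((c • f) x) = _
        rw [this]
        simp [lp.coeFn_smul] }
    (max C 0) (fun f => by
      refine lp.norm_le_of_tsum_le hr (by positivity) ?_
      show ∑' (x : X), ‖T x (f x)‖ ^ (2 : ℝ≥0∞).toReal ≤ _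
      calc ∑' (x : X), ‖T x (f x)‖ ^ (2 : ℝ≥0∞).toReal
          ≤ ∑' (x : X), (max C 0) ^ (2 : ℝ≥0∞).toReal * ‖f x‖ ^ (2 : ℝ≥0∞).toReal :=
            Summable.tsum_le_tsum (key f)
              (Summable.of_nonneg_of_le
                (fun x => Real.rpow_nonneg (norm_nonneg _) _) (key f)
                (((lp.memℓp f).summable hr).mul_left _))
              (((lp.memℓp f).summable hr).mul_left _)
        _ = (max C 0) ^ (2 : ℝ≥0∞).toReal * ∑' (x : X), ‖f x‖ ^ (2 : ℝ≥0∞).toReal :=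
            tsum_mul_left
        _ = (max C 0) ^ (2 : ℝ≥0∞).toReal * ‖f‖ ^ (2 : ℝ≥0∞).toReal := by
            rw [lp.norm_rpow_eq_tsum hr]
        _ = (max C 0 * ‖f‖) ^ (2 : ℝ≥0∞).toReal :=
            (Real.mul_rpow (by positivity) (norm_nonneg _)).symm)

section CB

variable {A' B' : Type*} [AddCommMonoid A'] [Module ℂ A'] [AddCommMonoid B'] [Module ℂ B']
variable {K : Type*} [NormedAddCommGroup K] [InnerProductSpace ℂ K] [CompleteSpace K]

/-- All matrix amplifications of `Φ` are bounded by `C`, where matrices over the abstract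
spaces are normed through the given embeddings into concrete operator algebras. -/
def CBBound (ιA : A' → (H →L[ℂ] H)) (ιB : B' → (K →L[ℂ] K))
    (Φ : A' →ₗ[ℂ] B') (C : ℝ) : Prop :=
  ∀ (n : ℕ) (M : Matrix (Fin n) (Fin n) A'),
    ‖matOp (M.map (fun a => ιB (Φ a)))‖ ≤ C * ‖matOp (M.map ιA)‖

/-- Complete boundedness of a linear map, relative to embeddings of its domain and
codomain into concrete operator algebras. -/
def IsCB (ιA : A' → (H →L[ℂ] H)) (ιB : B' → (K →L[ℂ] K)) (Φ : A' →ₗ[ℂ] B') : Prop :=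
  ∃ C : ℝ, 0 ≤ C ∧ CBBound ιA ιB Φ C

/-- The completely bounded norm of a linear map, relative to embeddings of its domain
and codomain into concrete operator algebras. -/
def cbNorm (ιA : A' → (H →L[ℂ] H)) (ιB : B' → (K →L[ℂ] K)) (Φ : A' →ₗ[ℂ] B') : ℝ :=
  sInf { C : ℝ | 0 ≤ C ∧ CBBound ιA ιB Φ C }

end CB

section Schur

variable {A : Type*} [NonUnitalCStarAlgebra A]

/-- A *-representation is non-degenerate if the span of the vectors in its range is dense. -/
def NondegenerateRep {K : Type*} [NormedAddCommGroup K] [InnerProductSpace ℂ K]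
    [CompleteSpace K] (ρ : A →⋆ₙₐ[ℂ] (K →L[ℂ] K)) : Prop :=
  Dense (Submodule.span ℂ {ξ : K | ∃ (a : A) (v : K), ρ a v = ξ} : Set K)

/-- A function `φ : X × X → CB(A, B(H))` is of positive type if it maps positive
matrices to positive matrices, entrywise. -/
def PositiveType (φ : X → X → (A →ₗ[ℂ] (H →L[ℂ] H))) : Prop :=
  ∀ (m : ℕ) (x : Fin m → X) (a : Matrix (Fin m) (Fin m) A),
    MatPos a → MatPos (Matrix.of fun p q => φ (x p) (x q) (a p q))

/-- A kernel `k : X × X → A` is positive definite if all the matrices obtained by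
sampling it at finitely many points are positive. -/
def PosDefKernel (k : X × X → A) : Prop :=
  ∀ (n : ℕ) (x : Fin n → X), MatPos (Matrix.of fun i j => k (x i, x j))

/-- The operator `T_k` on `ℓ²(X,H)` of a kernel `k : X × X → A`, via the embedding
`ι : A → B(H)` (it is `0` unless `k` is finitely supported). -/
def TKer (ι : A →⋆ₙₐ[ℂ] (H →L[ℂ] H)) (k : X × X → A) :
    lp (fun _ : X => H) 2 →L[ℂ] lp (fun _ : X => H) 2 :=
  TOp (fun p => ι (k p))

/-- `C` is a complete bound for the Schur multiplication map `S_φ : T_k ↦ T_{φ·k}`,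
tested on (matrices of) finitely supported kernels, which span a dense subspace of
`K(ℓ²(X)) ⊗ A`. -/
def SchurBound (ι : A →⋆ₙₐ[ℂ] (H →L[ℂ] H)) (φ : X → X → (A →ₗ[ℂ] (H →L[ℂ] H)))
    (C : ℝ) : Prop :=
  ∀ (n : ℕ) (k : Fin n → Fin n → (X × X → A)),
    (∀ i j, (Function.support (k i j)).Finite) →
    ‖matOp (Matrix.of fun i j => TOp (fun p => φ p.1 p.2 (k i j p)))‖
      ≤ C * ‖matOp (Matrix.of fun i j => TKer ι (k i j))‖

/-- `φ` is a Schur `A`-multiplier: the map `S_φ : T_k ↦ T_{φ·k}` is completely bounded. -/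
def IsSchurMultiplier (ι : A →⋆ₙₐ[ℂ] (H →L[ℂ] H))
    (φ : X → X → (A →ₗ[ℂ] (H →L[ℂ] H))) : Prop :=
  ∃ C : ℝ, 0 ≤ C ∧ SchurBound ι φ C

/-- The multiplier norm `‖φ‖_m = ‖S_φ‖_cb` of a Schur `A`-multiplier. -/
def schurNorm (ι : A →⋆ₙₐ[ℂ] (H →L[ℂ] H))
    (φ : X → X → (A →ₗ[ℂ] (H →L[ℂ] H))) : ℝ :=
  sInf { C : ℝ | 0 ≤ C ∧ SchurBound ι φ C }

/-- Complete positivity of the map `S_φ : K(ℓ²(X)) ⊗ A → K(ℓ²(X)) ⊗ B(H)`, tested on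
(matrices of) finitely supported kernels. -/
def SchurCP (ι : A →⋆ₙₐ[ℂ] (H →L[ℂ] H)) (φ : X → X → (A →ₗ[ℂ] (H →L[ℂ] H))) : Prop :=
  ∀ (n : ℕ) (k : Fin n → Fin n → (X × X → A)),
    (∀ i j, (Function.support (k i j)).Finite) →
    MatPos (Matrix.of fun i j => TKer ι (k i j)) →
    MatPos (Matrix.of fun i j => TOp (fun p => φ p.1 p.2 (k i j p)))

end Schur

section Dynamics

variable {A : Type*} [NonUnitalCStarAlgebra A]

/-- `α` is an action of the group `G` on `A` by *-automorphisms. -/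
def IsAction (α : G → A ≃⋆ₐ[ℂ] A) : Prop :=
  (∀ a, α 1 a = a) ∧ ∀ s t : G, ∀ a : A, α (s * t) a = α s (α t a)

/-- A *-automorphism of `A`, as a `ℂ`-linear map. -/
def autLin (e : A ≃⋆ₐ[ℂ] A) : A →ₗ[ℂ] A :=
  { toFun := e
    map_add' := fun a b => map_add e a b
    map_smul' := fun c a => map_smul e c a }

/-- The representation `π` of `A` on `ℓ²(G,H)`: `(π(a)ξ)(s) = α_{s⁻¹}(a)(ξ(s))`. -/
def piRep (ι : A →⋆ₙₐ[ℂ] (H →L[ℂ] H)) (α : G → A ≃⋆ₐ[ℂ] A) (a : A) :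
    lp (fun _ : G => H) 2 →L[ℂ] lp (fun _ : G => H) 2 :=
  diagOp (fun s => ι (α s⁻¹ a)) ‖a‖ (fun s =>
    (NonUnitalStarAlgHom.norm_apply_le ι (α s⁻¹ a)).trans_eq
      (StarAlgEquiv.norm_map (α s⁻¹) a))

/-- The reduced crossed product `A ⋊_{α,r} G`, realised concretely on `ℓ²(G,H)` as the
norm closure of the linear span of the operators `π(a)λ_t`. -/
def CrossedSet (ι : A →⋆ₙₐ[ℂ] (H →L[ℂ] H)) (α : G → A ≃⋆ₐ[ℂ] A) :
    Set (lp (fun _ : G => H) 2 →L[ℂ] lp (fun _ : G => H) 2) :=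
  closure (Submodule.span ℂ
    {x | ∃ (a : A) (t : G), x = piRep ι α a * lam t} : Set _)

/-- `E` is the canonical conditional expectation of the reduced crossed product onto `A`:
it is characterised by `ι (E x) = (x)_{e,e}`, the `(e,e)` matrix entry of `x`. -/
def IsCondExp (ι : A →⋆ₙₐ[ℂ] (H →L[ℂ] H)) (α : G → A ≃⋆ₐ[ℂ] A)
    (E : (lp (fun _ : G => H) 2 →L[ℂ] lp (fun _ : G => H) 2) →ₗ[ℂ] A) : Prop :=
  ∀ x ∈ CrossedSet ι α, ι (E x) = (lpEval (1 : G)) ∘L x ∘L (lpSingle (1 : G))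

/-- The defining property of the map `S_F` associated with `F : G → CB(A)`:
`S_F(π(a)λ_s) = π(F(s)(a))λ_s`. -/
def HSGenProp (ι : A →⋆ₙₐ[ℂ] (H →L[ℂ] H)) (α : G → A ≃⋆ₐ[ℂ] A)
    (F : G → (A →ₗ[ℂ] A))
    (Φ : (lp (fun _ : G => H) 2 →L[ℂ] lp (fun _ : G => H) 2) →ₗ[ℂ]
         (lp (fun _ : G => H) 2 →L[ℂ] lp (fun _ : G => H) 2)) : Prop :=
  ∀ (a : A) (s : G), Φ (piRep ι α a * lam s) = piRep ι α (F s a) * lam s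

/-- `Φ` maps the reduced crossed product into itself and, on matrices over the reduced
crossed product, all amplifications of `Φ` are bounded by `C`. -/
def CBBoundOnCrossed (ι : A →⋆ₙₐ[ℂ] (H →L[ℂ] H)) (α : G → A ≃⋆ₐ[ℂ] A)
    (Φ : (lp (fun _ : G => H) 2 →L[ℂ] lp (fun _ : G => H) 2) →ₗ[ℂ]
         (lp (fun _ : G => H) 2 →L[ℂ] lp (fun _ : G => H) 2)) (C : ℝ) : Prop :=
  ∀ (n : ℕ) (M : Matrix (Fin n) (Fin n)
      (lp (fun _ : G => H) 2 →L[ℂ] lp (fun _ : G => H) 2)),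
    (∀ i j, M i j ∈ CrossedSet ι α) →
      ‖matOp (M.map Φ)‖ ≤ C * ‖matOp M‖

/-- `Φ` is completely positive on the reduced crossed product: matrices over the crossed
product which are positive are mapped to positive matrices. -/
def CPOnCrossed (ι : A →⋆ₙₐ[ℂ] (H →L[ℂ] H)) (α : G → A ≃⋆ₐ[ℂ] A)
    (Φ : (lp (fun _ : G => H) 2 →L[ℂ] lp (fun _ : G => H) 2) →ₗ[ℂ]
         (lp (fun _ : G => H) 2 →L[ℂ] lp (fun _ : G => H) 2)) : Prop :=
  (∀ x ∈ CrossedSet ι α, Φ x ∈ CrossedSet ι α) ∧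
  ∀ (n : ℕ) (M : Matrix (Fin n) (Fin n)
      (lp (fun _ : G => H) 2 →L[ℂ] lp (fun _ : G => H) 2)),
    (∀ i j, M i j ∈ CrossedSet ι α) → MatPos M → MatPos (M.map Φ)

/-- `F : G → CB(A)` is a Herz-Schur `(A,G,α)`-multiplier: the map `S_F` determined by
`S_F(π(a)λ_s) = π(F(s)(a))λ_s` extends to a completely bounded map on `A ⋊_{α,r} G`. -/
def IsHerzSchurMultiplier (ι : A →⋆ₙₐ[ℂ] (H →L[ℂ] H)) (α : G → A ≃⋆ₐ[ℂ] A)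
    (F : G → (A →ₗ[ℂ] A)) : Prop :=
  ∃ Φ, HSGenProp ι α F Φ ∧ (∀ x ∈ CrossedSet ι α, Φ x ∈ CrossedSet ι α) ∧
    ∃ C : ℝ, 0 ≤ C ∧ CBBoundOnCrossed ι α Φ C

/-- `F : G → CB(A)` is a completely positive Herz-Schur `(A,G,α)`-multiplier: the map
`S_F` extends to a completely positive (hence completely bounded) map on `A ⋊_{α,r} G`. -/
def IsHerzSchurMultiplierCP (ι : A →⋆ₙₐ[ℂ] (H →L[ℂ] H)) (α : G → A ≃⋆ₐ[ℂ] A)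
    (F : G → (A →ₗ[ℂ] A)) : Prop :=
  ∃ Φ, HSGenProp ι α F Φ ∧ CPOnCrossed ι α Φ ∧
    ∃ C : ℝ, 0 ≤ C ∧ CBBoundOnCrossed ι α Φ C

/-- The function `N(F) : G × G → CB(A)`, `N(F)(s,t)(a) = α_{s⁻¹}(F(st⁻¹)(α_s(a)))`. -/
def NF (α : G → A ≃⋆ₐ[ℂ] A) (F : G → (A →ₗ[ℂ] A)) : G → G → (A →ₗ[ℂ] A) :=
  fun s t => (autLin (α s⁻¹)) ∘ₗ (F (s * t⁻¹)) ∘ₗ (autLin (α s))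

end Dynamics

section Trace

variable {A : Type*} [NonUnitalCStarAlgebra A]

/-- `τ` is a positive linear functional. -/
def IsPositiveFunctional (τ : A →ₗ[ℂ] ℂ) : Prop :=
  ∀ a : A, 0 ≤ τ (star a * a)

/-- `τ` is tracial. -/
def IsTracial (τ : A →ₗ[ℂ] ℂ) : Prop :=
  ∀ a b : A, τ (a * b) = τ (b * a)

/-- `τ` is faithful. -/
def IsFaithfulFunctional (τ : A →ₗ[ℂ] ℂ) : Prop :=
  ∀ a : A, τ (star a * a) = 0 → a = 0

/-- The `L²`-norm `‖a‖_{2,τ} = τ(a*a)^{1/2}` associated with a positive functional `τ`. -/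
def l2norm (τ : A →ₗ[ℂ] ℂ) (a : A) : ℝ :=
  Real.sqrt (τ (star a * a)).re

/-- A map `Φ : A → A` is `L²`-bounded by `C` with respect to `τ`. -/
def L2BoundedBy (τ : A →ₗ[ℂ] ℂ) (Φ : A →ₗ[ℂ] A) (C : ℝ) : Prop :=
  ∀ a : A, l2norm τ (Φ a) ≤ C * l2norm τ a

/-- A map `Φ : A → A` is `L²`-bounded with respect to `τ`, i.e. it extends to a bounded
operator `T_Φ` on `L²(A,τ)`. -/
def L2Bounded (τ : A →ₗ[ℂ] ℂ) (Φ : A →ₗ[ℂ] A) : Prop :=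
  ∃ C : ℝ, 0 ≤ C ∧ L2BoundedBy τ Φ C

/-- The norm of the extension `T_Φ` of `Φ` to `L²(A,τ)`. -/
def l2OpNorm (τ : A →ₗ[ℂ] ℂ) (Φ : A →ₗ[ℂ] A) : ℝ :=
  sInf { C : ℝ | 0 ≤ C ∧ L2BoundedBy τ Φ C }

/-- `Φ` is `L²`-compact with respect to `τ`: the image under `Φ` of the `L²`-unit ball of
`A` is totally bounded in the `L²`-norm; equivalently, the extension `T_Φ` of `Φ` to
`L²(A,τ)` is a compact operator. -/
def L2Compact (τ : A →ₗ[ℂ] ℂ) (Φ : A →ₗ[ℂ] A) : Prop :=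
  ∀ ε : ℝ, 0 < ε → ∃ S : Finset A, ∀ a : A, l2norm τ a ≤ 1 →
    ∃ b ∈ S, l2norm τ (Φ a - b) < ε

end Trace

section Props

variable {A : Type*} [CStarAlgebra A]

/-- The pair `(A,τ)` has the C*-algebra Haagerup property (Definition 3.1, Dong). -/
def CStarHaagerup (τ : A →ₗ[ℂ] ℂ) : Prop :=
  ∃ (I : Type) (_ : Nonempty I) (_ : SemilatticeSup I) (Φ : I → (A →ₗ[ℂ] A)),
    (∀ i, Φ i 1 = 1) ∧
    (∀ i, IsCompletelyPositive (Φ i)) ∧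
    (∀ i (a : A), τ (Φ i (star a * a)) ≤ τ (star a * a)) ∧
    (∀ i, L2Compact τ (Φ i)) ∧
    (∀ a : A, Filter.Tendsto (fun i => l2norm τ (Φ i a - a)) Filter.atTop (nhds 0))

/-- `A` is a nuclear C*-algebra: there is a net of finite-rank completely positive
contractions converging to the identity in the point-norm topology. -/
def NuclearCStarAlgebra (A : Type*) [NonUnitalCStarAlgebra A] : Prop :=
  ∃ (I : Type) (_ : Nonempty I) (_ : SemilatticeSup I) (Φ : I → (A →ₗ[ℂ] A)),
    (∀ i, IsCompletelyPositive (Φ i)) ∧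
    (∀ i (a : A), ‖Φ i a‖ ≤ ‖a‖) ∧
    (∀ i, FiniteDimensional ℂ (LinearMap.range (Φ i))) ∧
    (∀ a : A, Filter.Tendsto (fun i => ‖Φ i a - a‖) Filter.atTop (nhds 0))

/-- A discrete group `G` has the Haagerup property: there is a net of normalised
positive-definite functions on `G`, vanishing at infinity, converging pointwise to `1`. -/
def GroupHaagerup (G : Type*) [Group G] : Prop :=
  ∃ (I : Type) (_ : Nonempty I) (_ : SemilatticeSup I) (φ : I → G → ℂ),
    (∀ i, φ i 1 = 1) ∧
    (∀ i (n : ℕ) (s : Fin n → G) (μ : Fin n → ℂ),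
      0 ≤ ∑ k, ∑ l, (starRingEnd ℂ) (μ k) * φ i ((s k)⁻¹ * s l) * μ l) ∧
    (∀ i, ∀ ε : ℝ, 0 < ε → ∃ S : Finset G, ∀ s ∉ S, ‖φ i s‖ ≤ ε) ∧
    (∀ s : G, Filter.Tendsto (fun i => φ i s) Filter.atTop (nhds 1))

end Props

section More

variable {A : Type*} [NonUnitalCStarAlgebra A]

/-- A star homomorphism, as a `ℂ`-linear map. -/
def iotaLin {B : Type*} [NonUnitalCStarAlgebra B] (ι : A →⋆ₙₐ[ℂ] B) : A →ₗ[ℂ] B :=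
  { toFun := ι
    map_add' := fun a b => map_add ι a b
    map_smul' := fun c a => map_smul ι c a }

/-- A function `φ : X × X → CB(A)` with values in the maps on `A` is of positive type. -/
def PositiveTypeA (φ : X → X → (A →ₗ[ℂ] A)) : Prop :=
  ∀ (m : ℕ) (x : Fin m → X) (a : Matrix (Fin m) (Fin m) A),
    MatPos a → MatPos (Matrix.of fun p q => φ (x p) (x q) (a p q))

/-- The representation `π` of `A` on `ℓ²(G,H)`, as a linear map. -/
def piRepLin (ι : A →⋆ₙₐ[ℂ] (H →L[ℂ] H)) (α : G → A ≃⋆ₐ[ℂ] A) :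
    A →ₗ[ℂ] (lp (fun _ : G => H) 2 →L[ℂ] lp (fun _ : G => H) 2) :=
  { toFun := piRep ι α
    map_add' := fun a b => by
      apply ContinuousLinearMap.ext; intro f
      apply lp.ext; funext s
      have h1 : (((piRep ι α a + piRep ι α b) f :
          lp (fun _ : G => H) 2) : ∀ _ : G, H) s
          = ((piRep ι α a f : ∀ _ : G, H) s) + ((piRep ι α b f : ∀ _ : G, H) s) := by
        rw [ContinuousLinearMap.add_apply]
        exact congrFun (lp.coeFn_add (piRep ι α a f) (piRep ι α b f)) s
      show ι (α s⁻¹ (a + b)) (f s) = _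
      rw [h1]
      show _ = ι (α s⁻¹ a) (f s) + ι (α s⁻¹ b) (f s)
      rw [map_add (α s⁻¹), map_add ι, ContinuousLinearMap.add_apply]
    map_smul' := fun c a => by
      apply ContinuousLinearMap.ext; intro f
      apply lp.ext; funext s
      have h1 : (((c • piRep ι α a) f :
          lp (fun _ : G => H) 2) : ∀ _ : G, H) s
          = c • ((piRep ι α a f : ∀ _ : G, H) s) := by
        rw [ContinuousLinearMap.smul_apply]
        exact congrFun (lp.coeFn_smul c (piRep ι α a f)) s
      show ι (α s⁻¹ (c • a)) (f s) = _
      rw [RingHom.id_apply, h1]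
      show _ = c • ι (α s⁻¹ a) (f s)
      rw [map_smul (α s⁻¹), map_smul ι, ContinuousLinearMap.smul_apply] }

/-- The completely bounded norm of a map defined on the reduced crossed product. -/
def cbNormOnCrossed (ι : A →⋆ₙₐ[ℂ] (H →L[ℂ] H)) (α : G → A ≃⋆ₐ[ℂ] A)
    (Φ : (lp (fun _ : G => H) 2 →L[ℂ] lp (fun _ : G => H) 2) →ₗ[ℂ]
         (lp (fun _ : G => H) 2 →L[ℂ] lp (fun _ : G => H) 2)) : ℝ :=
  sInf { C : ℝ | 0 ≤ C ∧ CBBoundOnCrossed ι α Φ C }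

/-- The `L²`-norm `‖x‖_{2,τ'}` on the reduced crossed product induced by the trace
`τ' = τ ∘ E`. -/
def l2normCr (τ : A →ₗ[ℂ] ℂ)
    (E : (lp (fun _ : G => H) 2 →L[ℂ] lp (fun _ : G => H) 2) →ₗ[ℂ] A)
    (x : lp (fun _ : G => H) 2 →L[ℂ] lp (fun _ : G => H) 2) : ℝ :=
  Real.sqrt (τ (E (star x * x))).re

/-- The map `h_Φ : G → CB(A)` associated with a map `Φ` on the reduced crossed product:
`h_Φ(s)(a) = E(Φ(π(a)λ_s)λ_s*)`. -/
def hMap (ι : A →⋆ₙₐ[ℂ] (H →L[ℂ] H)) (α : G → A ≃⋆ₐ[ℂ] A)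
    (E : (lp (fun _ : G => H) 2 →L[ℂ] lp (fun _ : G => H) 2) →ₗ[ℂ] A)
    (Φ : (lp (fun _ : G => H) 2 →L[ℂ] lp (fun _ : G => H) 2) →ₗ[ℂ]
         (lp (fun _ : G => H) 2 →L[ℂ] lp (fun _ : G => H) 2))
    (s : G) : A →ₗ[ℂ] A :=
  E ∘ₗ (LinearMap.mulRight ℂ (star (lam s))) ∘ₗ Φ ∘ₗ
    (LinearMap.mulRight ℂ (lam (H := H) s)) ∘ₗ piRepLin ι α

end More

section BigProps

open Filter

variable {A : Type*} [CStarAlgebra A]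

/-- The Haagerup property for the `C*`-dynamical system `(A,G,α,τ)` (Definition 3.3). -/
def DynHaagerup (ι : A →⋆ₙₐ[ℂ] (H →L[ℂ] H)) (α : G → A ≃⋆ₐ[ℂ] A)
    (τ : A →ₗ[ℂ] ℂ) : Prop :=
  ∃ (I : Type) (_ : Nonempty I) (_ : SemilatticeSup I) (F : I → G → (A →ₗ[ℂ] A)),
    (∀ i, IsHerzSchurMultiplierCP ι α (F i)) ∧
    (∀ i, F i 1 1 = 1) ∧
    (∀ i (a : A), τ (F i 1 (star a * a)) ≤ τ (star a * a)) ∧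
    (∀ i (t : G), L2Compact τ (F i t)) ∧
    (∀ i, ∀ ε : ℝ, 0 < ε → ∃ S : Finset G, ∀ s ∉ S, l2OpNorm τ (F i s) ≤ ε) ∧
    (∀ (t : G) (a : A),
      Tendsto (fun i => l2norm τ (F i t a - a)) atTop (nhds 0))

/-- The C*-algebra Haagerup property for the reduced crossed product `A ⋊_{α,r} G`
endowed with the induced trace `τ' = τ ∘ E` (Definition 3.1). -/
def CrossedCStarHaagerup (ι : A →⋆ₙₐ[ℂ] (H →L[ℂ] H)) (α : G → A ≃⋆ₐ[ℂ] A)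
    (τ : A →ₗ[ℂ] ℂ)
    (E : (lp (fun _ : G => H) 2 →L[ℂ] lp (fun _ : G => H) 2) →ₗ[ℂ] A) : Prop :=
  ∃ (I : Type) (_ : Nonempty I) (_ : SemilatticeSup I)
    (Φ : I → ((lp (fun _ : G => H) 2 →L[ℂ] lp (fun _ : G => H) 2) →ₗ[ℂ]
              (lp (fun _ : G => H) 2 →L[ℂ] lp (fun _ : G => H) 2))),
    (∀ i, Φ i 1 = 1) ∧
    (∀ i, CPOnCrossed ι α (Φ i)) ∧
    (∀ i, ∀ x ∈ CrossedSet ι α, τ (E (Φ i (star x * x))) ≤ τ (E (star x * x))) ∧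
    (∀ i, ∀ ε : ℝ, 0 < ε →
      ∃ S : Finset (lp (fun _ : G => H) 2 →L[ℂ] lp (fun _ : G => H) 2),
        ∀ x ∈ CrossedSet ι α, l2normCr τ E x ≤ 1 →
          ∃ b ∈ S, l2normCr τ E (Φ i x - b) < ε) ∧
    (∀ x ∈ CrossedSet ι α,
      Tendsto (fun i => l2normCr τ E (Φ i x - x)) atTop (nhds 0))

end BigProps

section Nuc

open Filter

variable {A : Type*} [NonUnitalCStarAlgebra A]

/-- Nuclearity of the reduced crossed product `A ⋊_{α,r} G`: there is a net of
finite-rank completely positive contractions on it converging to the identity in the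
point-norm topology. -/
def CrossedNuclear (ι : A →⋆ₙₐ[ℂ] (H →L[ℂ] H)) (α : G → A ≃⋆ₐ[ℂ] A) : Prop :=
  ∃ (I : Type) (_ : Nonempty I) (_ : SemilatticeSup I)
    (Φ : I → ((lp (fun _ : G => H) 2 →L[ℂ] lp (fun _ : G => H) 2) →ₗ[ℂ]
              (lp (fun _ : G => H) 2 →L[ℂ] lp (fun _ : G => H) 2))),
    (∀ i, CPOnCrossed ι α (Φ i)) ∧
    (∀ i, ∀ x ∈ CrossedSet ι α, ‖Φ i x‖ ≤ ‖x‖) ∧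
    (∀ i, FiniteDimensional ℂ
      (Submodule.span ℂ ((fun x => Φ i x) '' CrossedSet ι α))) ∧
    (∀ x ∈ CrossedSet ι α, Tendsto (fun i => ‖Φ i x - x‖) atTop (nhds 0))

/-- Nuclearity of the `C*`-dynamical system `(A,G,α)` (Definition 4.2): a net of
completely positive, finitely supported Herz-Schur multipliers, with `‖F_i(e)‖_cb ≤ 1`,
with finite-rank values, converging to the identity pointwise in norm. -/
def DynNuclear (ι : A →⋆ₙₐ[ℂ] (H →L[ℂ] H)) (α : G → A ≃⋆ₐ[ℂ] A) : Prop :=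
  ∃ (I : Type) (_ : Nonempty I) (_ : SemilatticeSup I) (F : I → G → (A →ₗ[ℂ] A)),
    (∀ i, IsHerzSchurMultiplierCP ι α (F i)) ∧
    (∀ i, (Function.support (F i)).Finite) ∧
    (∀ i, CBBound (fun a => ι a) (fun a => ι a) (F i 1) 1) ∧
    (∀ i (s : G), FiniteDimensional ℂ (LinearMap.range (F i s))) ∧
    (∀ (s : G) (a : A), Tendsto (fun i => ‖F i s a - a‖) atTop (nhds 0))

end Nuc

section Amen

open Filter

variable {A : Type*} [CStarAlgebra A]

/-- Amenability of the action `α` of a discrete group `G` on a unital C*-algebra `A`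
(Definition 4.5): a net of finitely supported functions `T_i : G → Z(A)⁺` with
`Σ_s T_i(s)² = 1` and `‖Σ_s (T_i(s) - α_t(T_i(t⁻¹s)))*(T_i(s) - α_t(T_i(t⁻¹s)))‖ → 0`. -/
def AmenableAction {G : Type*} [Group G] (α : G → A ≃⋆ₐ[ℂ] A) : Prop :=
  ∃ (I : Type) (_ : Nonempty I) (_ : SemilatticeSup I) (T : I → G → A),
    (∀ i, (Function.support (T i)).Finite) ∧
    (∀ i (s : G) (c : A), Commute (T i s) c) ∧
    (∀ i (s : G), ∃ b : A, T i s = star b * b) ∧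
    (∀ i, ∑ᶠ s : G, T i s * T i s = 1) ∧
    (∀ t : G, Tendsto (fun i =>
        ‖∑ᶠ s : G, star (T i s - α t (T i (t⁻¹ * s))) *
          (T i s - α t (T i (t⁻¹ * s)))‖) atTop (nhds 0))

end Amen

universe u v w

/-- Data for a Stinespring-type representation of an operator-valued function on
`X × X`: a Hilbert space `K`, a *-representation `ρ : A → B(K)` and
families of operators `V, W : X → B(H,K)`. -/
structure OpValuedRep (A : Type u) [NonUnitalCStarAlgebra A]
    (H : Type v) [NormedAddCommGroup H] [InnerProductSpace ℂ H] [CompleteSpace H]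
    (X : Type w) where
  /-- the Hilbert space of the representation -/
  K : Type (max u v w)
  [nacg : NormedAddCommGroup K]
  [ips : InnerProductSpace ℂ K]
  [cpl : CompleteSpace K]
  /-- the representation -/
  ρ : A →⋆ₙₐ[ℂ] (K →L[ℂ] K)
  /-- the left family of operators -/
  V : X → (H →L[ℂ] K)
  /-- the right family of operators -/
  W : X → (H →L[ℂ] K)

attribute [instance] OpValuedRep.nacg OpValuedRep.ips OpValuedRep.cpl

end
noncomputable section
open scoped ComplexOrder ENNReal
open Matrix

namespace SchurAux

lemma exists_factor {k E F G : Type*} [Field k] [AddCommGroup E] [Module k E]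
    [AddCommGroup F] [Module k F] [AddCommGroup G] [Module k G]
    (u : E →ₗ[k] F) (f : E →ₗ[k] G) (h : ∀ x, u x = 0 → f x = 0) :
    ∃ g : F →ₗ[k] G, ∀ x, g (u x) = f x := by
  obtain ⟨g, hg⟩ := LinearMap.exists_extend
    (((LinearMap.ker u).liftQ f (fun x hx => h x hx)) ∘ₗ u.quotKerEquivRange.symm.toLinearMap)
  refine ⟨g, fun x => ?_⟩
  have := LinearMap.congr_fun hg ⟨u x, LinearMap.mem_range_self u x⟩
  simpa [LinearMap.quotKerEquivRange_symm_apply_image] using this.trans (by simp; exact Submodule.liftQ_apply _ _ _)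

section
variable {H : Type*} [NormedAddCommGroup H] [InnerProductSpace ℂ H]

lemma matOp_apply {ν : Type*} [Fintype ν] (M : Matrix ν ν (H →L[ℂ] H))
    (v : PiLp 2 (fun _ : ν => H)) (i : ν) : matOp M v i = ∑ j, M i j (v j) := by
  simp [matOp]

lemma inner_matOp {ν : Type*} [Fintype ν] (M : Matrix ν ν (H →L[ℂ] H))
    (w v : PiLp 2 (fun _ : ν => H)) :
    inner ℂ w (matOp M v) = ∑ i, ∑ j, inner ℂ (w i) (M i j (v j)) := by
  simp [PiLp.inner_apply, matOp_apply, inner_sum]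

lemma norm_matOp_le {ν : Type*} [Fintype ν] (M : Matrix ν ν (H →L[ℂ] H)) (B : ℝ) (hB : 0 ≤ B)
    (h : ∀ w v : PiLp 2 (fun _ : ν => H),
      ‖∑ i, ∑ j, inner ℂ (w i) (M i j (v j))‖ ≤ B * ‖w‖ * ‖v‖) : ‖matOp M‖ ≤ B := by
  refine ContinuousLinearMap.opNorm_le_bound _ hB fun v => ?_
  have := h (matOp M v) v
  rw [← inner_matOp] at this
  rw [inner_self_eq_norm_sq_to_K] at this
  simp only [norm_pow, Complex.coe_algebraMap, Complex.norm_real, norm_norm] at this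
  by_cases h0 : ‖matOp M v‖ = 0
  · rw [h0]; positivity
  · have : 0 < ‖matOp M v‖ := lt_of_le_of_ne (norm_nonneg _) (Ne.symm h0)
    nlinarith

lemma inner_matOp_le {ν : Type*} [Fintype ν] (M : Matrix ν ν (H →L[ℂ] H))
    (w v : PiLp 2 (fun _ : ν => H)) :
    ‖∑ i, ∑ j, inner ℂ (w i) (M i j (v j))‖ ≤ ‖matOp M‖ * ‖w‖ * ‖v‖ := by
  rw [← inner_matOp]
  calc _ ≤ ‖w‖ * ‖matOp M v‖ := norm_inner_le_norm _ _
    _ ≤ ‖w‖ * (‖matOp M‖ * ‖v‖) := by gcongr; exact (matOp M).le_opNorm v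
    _ = _ := by ring

lemma matOp_zero {ν : Type*} [Fintype ν] : matOp (0 : Matrix ν ν (H →L[ℂ] H)) = 0 := by
  ext v i; simp [matOp_apply]
lemma matOp_add {ν : Type*} [Fintype ν] (M N : Matrix ν ν (H →L[ℂ] H)) :
    matOp (M + N) = matOp M + matOp N := by
  ext v i; simp [matOp_apply, Finset.sum_add_distrib]
lemma matOp_smul {ν : Type*} [Fintype ν] (c : ℂ) (M : Matrix ν ν (H →L[ℂ] H)) :
    matOp (c • M) = c • matOp M := by
  ext v i; simp [matOp_apply, Finset.smul_sum]
lemma matOp_mul {ν : Type*} [Fintype ν] (M N : Matrix ν ν (H →L[ℂ] H)) :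
    matOp (M * N) = matOp M * matOp N := by
  ext v i
  change _ = matOp M (matOp N v) i
  simp only [matOp_apply, Matrix.mul_apply, _root_.sum_apply, map_sum]
  exact Finset.sum_comm
lemma matOp_star {ν : Type*} [Fintype ν] [CompleteSpace H] (M : Matrix ν ν (H →L[ℂ] H)) :
    matOp Mᴴ = star (matOp M) := by
  refine (ContinuousLinearMap.eq_adjoint_iff _ _).mpr fun x y => ?_
  rw [inner_matOp, ← inner_conj_symm, inner_matOp]
  simp only [Matrix.conjTranspose_apply, ContinuousLinearMap.star_eq_adjoint, map_sum, inner_conj_symm,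
    ContinuousLinearMap.adjoint_inner_left]
  exact Finset.sum_comm
end

section
variable {A : Type*} [NonUnitalCStarAlgebra A] [PartialOrder A] [StarOrderedRing A]
variable {K : Type*} [NormedAddCommGroup K] [InnerProductSpace ℂ K] [CompleteSpace K]

/-- amplification of a representation -/
def ampRep (ν : Type*) [Fintype ν] (ρ : A →⋆ₙₐ[ℂ] (K →L[ℂ] K)) :
    CStarMatrix ν ν A →⋆ₙₐ[ℂ] (PiLp 2 (fun _ : ν => K) →L[ℂ] PiLp 2 (fun _ : ν => K)) where
  toFun M := matOp (Matrix.map (CStarMatrix.ofMatrix.symm M) ρ)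
  map_smul' c M := by
    rw [← matOp_smul]; congr 1; ext i j; simp
  map_zero' := by
    rw [← matOp_zero]; congr 1; ext i j; simp
  map_add' M N := by
    rw [← matOp_add]; congr 1; ext i j; simp
  map_mul' M N := by
    rw [← matOp_mul]; congr 1; ext i j; simp [Matrix.mul_apply, CStarMatrix.mul_apply]
  map_star' M := by
    rw [← matOp_star]; congr 1; ext i j; simp [CStarMatrix.star_apply, map_star ρ (M j i)]
end

lemma norm_amp_le {A : Type*} [NonUnitalCStarAlgebra A]
    {H : Type*} [NormedAddCommGroup H] [InnerProductSpace ℂ H] [CompleteSpace H]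
    {K : Type*} [NormedAddCommGroup K] [InnerProductSpace ℂ K] [CompleteSpace K]
    (ι : A →⋆ₙₐ[ℂ] (H →L[ℂ] H)) (hisom : ∀ a : A, ‖ι a‖ = ‖a‖)
    (ρ : A →⋆ₙₐ[ℂ] (K →L[ℂ] K)) {ν : Type*} [Fintype ν] (M : Matrix ν ν A) :
    ‖matOp (M.map ρ)‖ ≤ ‖matOp (M.map ι)‖ := by
  classical
  let _ := CStarAlgebra.spectralOrder A
  have := CStarAlgebra.spectralOrderedRing A
  have hinj : Function.Injective (ampRep ν ι) := by
    rw [injective_iff_map_eq_zero]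
    intro N hN
    ext i j
    have hz : ‖ι (N i j)‖ = 0 := by
      rw [norm_eq_zero]
      ext v
      have := congrArg (fun T => T (WithLp.toLp 2 (Pi.single j v)) i) hN
      simp only [ampRep] at this
      change matOp _ _ _ = _ at this
      rw [matOp_apply] at this
      rw [Finset.sum_eq_single j] at this
      · simpa using this
      · intro b _ hb; simp [hb]
      · simp
    rw [hisom] at hz
    simpa using hz
  have h1 := NonUnitalStarAlgHom.norm_map (ampRep ν ι) hinj (CStarMatrix.ofMatrix M)
  have h2 := NonUnitalStarAlgHom.norm_apply_le (ampRep ν ρ) (CStarMatrix.ofMatrix M)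
  rw [← h1] at h2
  exact h2

end SchurAux

namespace SchurAux

lemma supp_sub {α M N : Type*} [Zero M] [Zero N] (f : α → M) (g : α → N) (s : Set α)
    (h : Function.support f ⊆ s) (h' : ∀ p, f p = 0 → g p = 0) : Function.support g ⊆ s :=
  fun p hp => h fun hz => hp (h' p hz)

section
variable {X : Type*} {H : Type*} [NormedAddCommGroup H] [InnerProductSpace ℂ H]

lemma lpSingle_self (x : X) (h : H) : (lpSingle x h : lp (fun _ : X => H) 2) x = h := by
  classical
  simp [lpSingle]

lemma norm_lpSingle (x : X) (h : H) : ‖(lpSingle x h : lp (fun _ : X => H) 2)‖ = ‖h‖ := by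
  classical
  exact lp.norm_single (p := 2) (E := fun _ : X => H) (by norm_num) x h

lemma inner_elemOp (f g : lp (fun _ : X => H) 2) (x y : X) (T : H →L[ℂ] H) :
    inner ℂ f (elemOp x y T g) = inner ℂ (f x) (T (g y)) := by
  classical
  exact lp.inner_single_right (𝕜 := ℂ) (G := fun _ : X => H) x (T (g y)) f

lemma elemOp_zero (x y : X) : elemOp x y (0 : H →L[ℂ] H) = 0 := by
  simp [elemOp]

lemma TOp_eq_sum (k : X × X → (H →L[ℂ] H)) (s : Finset (X × X)) (hs : Function.support k ⊆ s) :
    TOp k = ∑ p ∈ s, elemOp p.1 p.2 (k p) := by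
  apply finsum_eq_sum_of_support_subset
  refine subset_trans ?_ hs
  intro p hp hk
  apply hp
  simp only [hk, elemOp_zero]

lemma inner_TOp (k : X × X → (H →L[ℂ] H)) (F : Finset X)
    (hs : Function.support k ⊆ (F ×ˢ F : Finset (X × X))) (f g : lp (fun _ : X => H) 2) :
    inner ℂ f (TOp k g) = ∑ x : F, ∑ y : F, inner ℂ (f x) (k (x, y) (g y)) := by
  rw [TOp_eq_sum k _ hs, _root_.sum_apply, inner_sum]
  simp only [inner_elemOp]
  rw [Finset.sum_product, ← Finset.sum_coe_sort F]
  refine Finset.sum_congr rfl fun x _ => ?_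
  rw [← Finset.sum_coe_sort F]

lemma sum_norm_sq_le (f : lp (fun _ : X => H) 2) (F : Finset X) :
    ∑ x : F, ‖f x‖ ^ 2 ≤ ‖f‖ ^ 2 := by
  have := lp.sum_rpow_le_norm_rpow (by norm_num) f F
  rw [← Finset.sum_coe_sort F] at this
  simpa using this

lemma norm_le_of_sq {ν : Type*} [Fintype ν] {G : ν → Type*} [∀ i, NormedAddCommGroup (G i)]
    (w : PiLp 2 G) (b : ℝ) (hb : 0 ≤ b) (h : ∑ i, ‖w i‖ ^ 2 ≤ b ^ 2) : ‖w‖ ≤ b := by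
  rw [← PiLp.norm_sq_eq_of_L2] at h
  exact (sq_le_sq₀ (norm_nonneg _) hb).mp h

/-- spread a vector of `H^(n × F)` to `ℓ²(X,H)^n`. -/
lemma exists_spread (n : ℕ) (F : Finset X) (w : PiLp 2 (fun _ : Fin n × F => H)) :
    ∃ w' : PiLp 2 (fun _ : Fin n => lp (fun _ : X => H) 2),
      (∀ i (x : F), w' i x = w (i, x)) ∧ ‖w'‖ ≤ ‖w‖ := by
  classical
  let wt : Fin n → X → H := fun i x => if h : x ∈ F then w (i, ⟨x, h⟩) else 0
  refine ⟨WithLp.toLp 2 fun i => ∑ x ∈ F, lp.single 2 x (wt i x), ?_, ?_⟩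
  · intro i x
    simp only [lp.coeFn_sum, Finset.sum_apply, lp.coeFn_single, Finset.sum_pi_single]
    simp [wt]
  · apply norm_le_of_sq _ _ (norm_nonneg _)
    rw [PiLp.norm_sq_eq_of_L2, Fintype.sum_prod_type]
    apply Finset.sum_le_sum
    intro i _
    have := lp.norm_sum_single (E := fun _ : X => H) (p := 2) (by norm_num) (wt i) F
    simp only [ENNReal.toReal_ofNat, Real.rpow_ofNat] at this
    change ‖∑ x ∈ F, lp.single 2 x (wt i x)‖ ^ 2 ≤ _
    rw [this, ← Finset.sum_coe_sort F]
    apply le_of_eq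
    refine Finset.sum_congr rfl fun x _ => ?_
    simp [wt]

end

section
variable {X : Type*} {H : Type*} [NormedAddCommGroup H] [InnerProductSpace ℂ H]
    [CompleteSpace H] {A : Type*} [NonUnitalCStarAlgebra A]
variable {K : Type*} [NormedAddCommGroup K] [InnerProductSpace ℂ K] [CompleteSpace K]

lemma norm_restrict_le {n : ℕ} (F : Finset X) (V : X → (H →L[ℂ] K)) (c : ℝ) (hc : 0 ≤ c)
    (hV : ∀ x, ‖V x‖ ≤ c) (w : PiLp 2 (fun _ : Fin n => lp (fun _ : X => H) 2)) :
    ‖(WithLp.toLp 2 fun p : Fin n × F => V p.2 (w p.1 p.2) : PiLp 2 (fun _ : Fin n × F => K))‖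
      ≤ c * ‖w‖ := by
  apply norm_le_of_sq _ _ (by positivity)
  rw [Fintype.sum_prod_type, mul_pow, PiLp.norm_sq_eq_of_L2, Finset.mul_sum]
  apply Finset.sum_le_sum
  intro i _
  calc _ ≤ ∑ x : F, c ^ 2 * ‖w i x‖ ^ 2 := by
        apply Finset.sum_le_sum
        intro x _
        rw [← mul_pow]
        gcongr
        exact (V x).le_of_opNorm_le (hV x) _
    _ ≤ _ := by
        rw [← Finset.mul_sum]
        gcongr
        exact sum_norm_sq_le _ _

lemma schurBound_of_rep (ι : A →⋆ₙₐ[ℂ] (H →L[ℂ] H)) (hisom : ∀ a : A, ‖ι a‖ = ‖a‖)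
    (φ : X → X → (A →ₗ[ℂ] (H →L[ℂ] H))) (ρ : A →⋆ₙₐ[ℂ] (K →L[ℂ] K))
    (V W : X → (H →L[ℂ] K)) (c₁ c₂ : ℝ) (h₁ : 0 ≤ c₁) (h₂ : 0 ≤ c₂)
    (hV : ∀ x, ‖V x‖ ≤ c₁) (hW : ∀ x, ‖W x‖ ≤ c₂)
    (hφ : ∀ (x y : X) (a : A), φ x y a = (ContinuousLinearMap.adjoint (V x)) ∘L (ρ a) ∘L (W y)) :
    SchurBound ι φ (c₁ * c₂) := by
  classical
  intro n k hk
  let F : Finset X := Finset.univ.biUnion fun i : Fin n => Finset.univ.biUnion fun j : Fin n =>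
    (hk i j).toFinset.image Prod.fst ∪ (hk i j).toFinset.image Prod.snd
  have hF : ∀ i j, Function.support (k i j) ⊆ (F ×ˢ F : Finset (X × X)) := by
    intro i j p hp
    simp only [Finset.coe_product, Set.mem_prod, Finset.mem_coe, F, Finset.mem_biUnion,
      Finset.mem_univ, true_and, Finset.mem_union, Finset.mem_image, Set.Finite.mem_toFinset]
    exact ⟨⟨i, j, Or.inl ⟨p, hp, rfl⟩⟩, ⟨i, j, Or.inr ⟨p, hp, rfl⟩⟩⟩
  have hF1 : ∀ i j, Function.support (fun p : X × X => φ p.1 p.2 (k i j p))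
      ⊆ (F ×ˢ F : Finset (X × X)) := fun i j => supp_sub _ _ _ (hF i j) fun p hp => by simp [hp]
  have hF2 : ∀ i j, Function.support (fun p : X × X => ι (k i j p))
      ⊆ (F ×ˢ F : Finset (X × X)) := fun i j => supp_sub _ _ _ (hF i j) fun p hp => by simp [hp]
  let M : Matrix (Fin n × F) (Fin n × F) A := Matrix.of fun p q => k p.1 q.1 (p.2, q.2)
  have key : ‖matOp (M.map ι)‖ ≤ ‖matOp (Matrix.of fun i j => TKer ι (k i j))‖ := by
    apply norm_matOp_le _ _ (norm_nonneg _)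
    intro w v
    obtain ⟨w', hw', hnw⟩ := exists_spread n F w
    obtain ⟨v', hv', hnv⟩ := exists_spread n F v
    have := inner_matOp_le (Matrix.of fun i j => TKer ι (k i j)) w' v'
    have e : ∑ i, ∑ j, inner ℂ (w i) (M.map ι i j (v j))
        = ∑ i, ∑ j, inner ℂ (w' i) ((Matrix.of fun i j => TKer ι (k i j)) i j (v' j)) := by
      simp only [Matrix.of_apply, TKer]
      simp only [inner_TOp _ F (hF2 _ _), hw', hv']
      simp only [Fintype.sum_prod_type, Matrix.map_apply, M, Matrix.of_apply]
      refine Finset.sum_congr rfl fun i _ => ?_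
      exact Finset.sum_comm
    rw [e]
    refine this.trans ?_
    gcongr
  have key2 := norm_amp_le ι hisom ρ M
  refine norm_matOp_le _ _ (by positivity) fun w v => ?_
  have := inner_matOp_le (M.map ρ)
    (WithLp.toLp 2 fun p : Fin n × F => V p.2 (w p.1 p.2))
    (WithLp.toLp 2 fun p : Fin n × F => W p.2 (v p.1 p.2))
  have e : ∑ i, ∑ j, inner ℂ (w i) ((Matrix.of fun i j =>
      TOp (fun p => φ p.1 p.2 (k i j p))) i j (v j))
      = ∑ p : Fin n × F, ∑ q : Fin n × F,
        inner ℂ (V p.2 (w p.1 p.2)) (M.map ρ p q (W q.2 (v q.1 q.2))) := by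
    simp only [Matrix.of_apply]
    simp only [inner_TOp _ F (hF1 _ _)]
    simp only [Fintype.sum_prod_type, Matrix.map_apply, M, Matrix.of_apply, hφ,
      ContinuousLinearMap.comp_apply, ContinuousLinearMap.adjoint_inner_right]
    refine Finset.sum_congr rfl fun i _ => ?_
    exact Finset.sum_comm
  rw [e]
  refine this.trans ?_
  calc _ ≤ ‖matOp (Matrix.of fun i j => TKer ι (k i j))‖ * (c₁ * ‖w‖) * (c₂ * ‖v‖) := by
        gcongr
        · exact key2.trans key
        · exact norm_restrict_le F V c₁ h₁ hV w
        · exact norm_restrict_le F W c₂ h₂ hW v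
    _ = _ := by ring

lemma schurBound_extract (ι : A →⋆ₙₐ[ℂ] (H →L[ℂ] H))
    (φ : X → X → (A →ₗ[ℂ] (H →L[ℂ] H))) (C : ℝ) (hC : 0 ≤ C) (hS : SchurBound ι φ C)
    {n : ℕ} (x y : Fin n → X) (α : Fin n → Fin n → A) (B : ℝ) (hB : 0 ≤ B)
    (hα : ∀ w v : PiLp 2 (fun _ : Fin n => H),
      ‖∑ i, ∑ j, inner ℂ (w i) (ι (α i j) (v j))‖ ≤ B * ‖w‖ * ‖v‖)
    (h g : PiLp 2 (fun _ : Fin n => H)) :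
    ‖∑ i, ∑ j, inner ℂ (h i) (φ (x i) (y j) (α i j) (g j))‖ ≤ C * B * ‖h‖ * ‖g‖ := by
  classical
  let k : Fin n → Fin n → X × X → A := fun i j => Pi.single (x i, y j) (α i j)
  have hk : ∀ i j, Function.support (k i j) ⊆ ({(x i, y j)} : Finset (X × X)) := by
    intro i j
    intro p hp
    by_contra hne
    exact hp (Pi.single_eq_of_ne (by simpa using hne) _)
  have h1 : ∀ i j, TKer ι (k i j) = elemOp (x i) (y j) (ι (α i j)) := by
    intro i j
    unfold TKer
    rw [TOp_eq_sum _ {(x i, y j)}]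
    · simp [k]
    · exact supp_sub _ _ _ (hk i j) fun p hp => by simp [hp]
  have h2 : ∀ i j, TOp (fun p => φ p.1 p.2 (k i j p))
      = elemOp (x i) (y j) (φ (x i) (y j) (α i j)) := by
    intro i j
    rw [TOp_eq_sum _ {(x i, y j)}]
    · simp [k]
    · exact supp_sub _ _ _ (hk i j) fun p hp => by simp [hp]
  have hs := hS n k (fun i j => (Finset.finite_toSet _).subset (hk i j))
  simp only [h1, h2] at hs
  have up : ‖matOp (Matrix.of fun i j => elemOp (x i) (y j) (ι (α i j)))‖ ≤ B := by
    apply norm_matOp_le _ _ hB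
    intro w v
    simp only [Matrix.of_apply, inner_elemOp]
    refine (hα (WithLp.toLp 2 fun i => w i (x i)) (WithLp.toLp 2 fun i => v i (y i))).trans ?_
    have aux : ∀ (w : PiLp 2 (fun _ : Fin n => lp (fun _ : X => H) 2)) (x : Fin n → X),
        ‖(WithLp.toLp 2 fun i => w i (x i) : PiLp 2 (fun _ : Fin n => H))‖ ≤ ‖w‖ := by
      intro w x
      apply norm_le_of_sq _ _ (norm_nonneg _)
      rw [PiLp.norm_sq_eq_of_L2]
      apply Finset.sum_le_sum
      intro i _
      gcongr
      exact lp.norm_apply_le_norm (by norm_num) _ _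
    gcongr <;> apply aux
  have lo := inner_matOp_le (Matrix.of fun i j => elemOp (x i) (y j) (φ (x i) (y j) (α i j)))
    (WithLp.toLp 2 fun i => lpSingle (x i) (h i)) (WithLp.toLp 2 fun i => lpSingle (y i) (g i))
  simp only [Matrix.of_apply, inner_elemOp, lpSingle_self] at lo
  have aux : ∀ (h : PiLp 2 (fun _ : Fin n => H)) (x : Fin n → X),
      ‖(WithLp.toLp 2 fun i => lpSingle (x i) (h i) :
        PiLp 2 (fun _ : Fin n => lp (fun _ : X => H) 2))‖ ≤ ‖h‖ := by
    intro h x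
    apply norm_le_of_sq _ _ (norm_nonneg _)
    rw [PiLp.norm_sq_eq_of_L2]
    simp [norm_lpSingle]
  refine lo.trans ?_
  gcongr
  · exact hs.trans (by gcongr)
  · apply aux
  · apply aux

end
end SchurAux

namespace SchurAux

lemma cross_zero {n : ℕ} {H : Type*} [NormedAddCommGroup H] [InnerProductSpace ℂ H]
    (P Q : Fin n → Fin n → ℂ) (hPQ : ∀ l l', ∑ k, (starRingEnd ℂ) (P l k) * Q l' k = 0)
    (ζ : Fin n → H) :
    ∑ k, inner ℂ (∑ l, P l k • ζ l) (∑ l, Q l k • ζ l) = 0 := by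
  simp only [sum_inner, inner_sum, inner_smul_left, inner_smul_right, Finset.mul_sum]
  rw [Finset.sum_comm]
  refine Finset.sum_eq_zero fun l _ => ?_
  rw [Finset.sum_comm]
  refine Finset.sum_eq_zero fun l' _ => ?_
  have h2 := hPQ l' l
  calc _ = (∑ k, (starRingEnd ℂ) (P l' k) * Q l k) * inner ℂ (ζ l') (ζ l) := by
        rw [Finset.sum_mul]
        refine Finset.sum_congr rfl fun k _ => by ring
    _ = 0 := by rw [h2, zero_mul]

lemma exists_proj {n : ℕ} {E : Type*} [AddCommGroup E] [Module ℂ E] (e : Fin n → E)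
    {H : Type*} [NormedAddCommGroup H] [InnerProductSpace ℂ H] :
    ∃ P : Fin n → Fin n → ℂ, (∀ k, ∑ l, P l k • e l = e k) ∧
      (∀ ζ : Fin n → H, ∃ ξ : E →ₗ[ℂ] H, ∀ k, ξ (e k) = ∑ l, P l k • ζ l) ∧
      (∀ ζ : Fin n → H, ∑ k, ‖∑ l, P l k • ζ l‖ ^ 2 ≤ ∑ l, ‖ζ l‖ ^ 2) := by
  let u : EuclideanSpace ℂ (Fin n) →ₗ[ℂ] E :=
    { toFun := fun t => ∑ l, t l • e l
      map_add' := fun s t => by simp [add_smul, Finset.sum_add_distrib]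
      map_smul' := fun c t => by simp [Finset.smul_sum, mul_smul] }
  have hu : ∀ t, u t = ∑ l, t l • e l := fun t => rfl
  let N := LinearMap.ker u
  let p : EuclideanSpace ℂ (Fin n) →L[ℂ] EuclideanSpace ℂ (Fin n) := Nᗮ.starProjection
  let δ : Fin n → EuclideanSpace ℂ (Fin n) := fun k => EuclideanSpace.single k 1
  have hp0 : ∀ t ∈ N, p t = 0 := by
    intro t ht
    exact (Submodule.starProjection_apply_eq_zero_iff _).mpr
      ((Submodule.le_orthogonal_orthogonal N) ht)
  have hpN : ∀ t, t - p t ∈ N := by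
    intro t
    have := Submodule.sub_starProjection_mem_orthogonal (K := Nᗮ) t
    rwa [Submodule.orthogonal_orthogonal] at this
  have hup : ∀ t, u (p t) = u t := by
    intro t
    have : u (t - p t) = 0 := hpN t
    rw [map_sub, sub_eq_zero] at this
    exact this.symm
  have hpp : ∀ t, p (p t) = p t := by
    intro t
    have := hp0 _ (hpN t)
    rw [map_sub, sub_eq_zero] at this
    exact this.symm
  have huδ : ∀ k, u (δ k) = e k := by
    intro k
    rw [hu, Finset.sum_eq_single k] <;> simp +contextual [δ]
  have hexp : ∀ t : EuclideanSpace ℂ (Fin n), t = ∑ k, t k • δ k := by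
    intro t
    ext i
    simp [δ, Finset.sum_apply, Pi.single_apply]
  have hsym : ∀ l k, (starRingEnd ℂ) (p (δ k) l) = p (δ l) k := by
    intro l k
    have h1 : p (δ k) l = inner ℂ (δ l) (p (δ k)) := by simp [δ, EuclideanSpace.inner_single_left]
    have h2 : p (δ l) k = inner ℂ (δ k) (p (δ l)) := by simp [δ, EuclideanSpace.inner_single_left]
    rw [h1, h2, inner_conj_symm]
    exact Submodule.inner_starProjection_left_eq_right _ _ _
  refine ⟨fun l k => p (δ k) l, ?_, ?_, ?_⟩
  · intro k
    rw [← hu, hup, huδ]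
  · intro ζ
    let f : EuclideanSpace ℂ (Fin n) →ₗ[ℂ] H :=
      { toFun := fun t => ∑ l, p t l • ζ l
        map_add' := fun s t => by simp [add_smul, Finset.sum_add_distrib]
        map_smul' := fun c t => by simp [Finset.smul_sum, mul_smul] }
    obtain ⟨g, hg⟩ := exists_factor u f (fun t ht => by
      change ∑ l, p t l • ζ l = 0
      rw [hp0 t ht]; simp)
    exact ⟨g, fun k => by rw [← huδ, hg]; rfl⟩
  · intro ζ
    have hc := cross_zero (fun l k => p (δ k) l) (fun l k => (δ k - p (δ k)) l) (by
      intro l l'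
      simp only [hsym]
      have h0 : p (δ l) - p (p (δ l)) = 0 := by rw [hpp, sub_self]
      have h1 : ∑ k, p (δ l) k • (δ k - p (δ k)) = 0 := by
        rw [← h0]
        conv_rhs => rw [hexp (p (δ l))]
        simp only [map_sum, map_smul, smul_sub, Finset.sum_sub_distrib]
      have := congrArg (fun t : EuclideanSpace ℂ (Fin n) => t l') h1
      simpa using this) ζ
    have hk : ∀ k, ζ k = ∑ l, p (δ k) l • ζ l + ∑ l, (δ k - p (δ k)) l • ζ l := by
      intro k
      rw [← Finset.sum_add_distrib]
      simp only [← add_smul]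
      rw [Finset.sum_eq_single k] <;> simp +contextual [δ]
    have hn : ∀ k, ‖ζ k‖ ^ 2 = ‖∑ l, p (δ k) l • ζ l‖ ^ 2 +
        2 * (inner ℂ (∑ l, p (δ k) l • ζ l) (∑ l, (δ k - p (δ k)) l • ζ l)).re
        + ‖∑ l, (δ k - p (δ k)) l • ζ l‖ ^ 2 := by
      intro k
      conv_lhs => rw [hk k]
      exact norm_add_sq (𝕜 := ℂ) _ _
    rw [Finset.sum_congr rfl fun k _ => hn k]
    rw [Finset.sum_add_distrib, Finset.sum_add_distrib, ← Finset.mul_sum, ← Complex.re_sum, hc]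
    have : 0 ≤ ∑ k, ‖∑ l, (δ k - p (δ k)) l • ζ l‖ ^ 2 := by positivity
    simp only [Complex.zero_re]
    linarith

lemma sum4_comm {n : ℕ} (f : Fin n → Fin n → Fin n → Fin n → ℂ) :
    ∑ i, ∑ j, ∑ k, ∑ l, f i j k l = ∑ k, ∑ l, ∑ i, ∑ j, f i j k l := by
  calc _ = ∑ i, ∑ k, ∑ l, ∑ j, f i j k l := by
        refine Finset.sum_congr rfl fun i _ => ?_
        rw [Finset.sum_comm]
        refine Finset.sum_congr rfl fun k _ => ?_
        rw [Finset.sum_comm]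
    _ = _ := by
        rw [Finset.sum_comm]
        refine Finset.sum_congr rfl fun k _ => ?_
        rw [Finset.sum_comm]

lemma expand {n : ℕ} {A : Type*} [AddCommGroup A] [Module ℂ A] (β : Fin n → Fin n → A →ₗ[ℂ] ℂ)
    (P Q : Fin n → Fin n → ℂ) (a : Fin n → Fin n → A) :
    ∑ i, ∑ j, β i j (∑ k, ∑ l, ((starRingEnd ℂ) (P i k) * Q j l) • a k l)
      = ∑ k, ∑ l, ∑ i, (starRingEnd ℂ) (P i k) * ∑ j, Q j l * β i j (a k l) := by
  simp only [map_sum, map_smul, Finset.mul_sum, smul_eq_mul, mul_assoc]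
  exact sum4_comm _

section
variable {X : Type*} {H : Type*} [NormedAddCommGroup H] [InnerProductSpace ℂ H]
    [CompleteSpace H] {A : Type*} [NonUnitalCStarAlgebra A]

lemma exists_proj' {n : ℕ} (x : Fin n → X) (h : Fin n → H) :
    ∃ P : Fin n → Fin n → ℂ,
      (∀ (ψ : X → (H →ₗ[ℂ] ℂ)) k, ∑ l, P l k * ψ (x l) (h l) = ψ (x k) (h k)) ∧
      (∀ ζ : Fin n → H, ∃ ξ : X → (H →ₗ[ℂ] H), ∀ k, ξ (x k) (h k) = ∑ l, P l k • ζ l) ∧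
      (∀ ζ : Fin n → H, ∑ k, ‖∑ l, P l k • ζ l‖ ^ 2 ≤ ∑ l, ‖ζ l‖ ^ 2) := by
  classical
  obtain ⟨P, h1, h2, h3⟩ := exists_proj (fun l => Finsupp.single (x l) (h l)) (H := H)
  refine ⟨P, ?_, ?_, h3⟩
  · intro ψ k
    have := congrArg (Finsupp.lsum ℂ ψ) (h1 k)
    simpa using this
  · intro ζ
    obtain ⟨ξ, hξ⟩ := h2 ζ
    exact ⟨fun x => ξ ∘ₗ Finsupp.lsingle x, fun k => hξ k⟩

lemma key_fin (ι : A →⋆ₙₐ[ℂ] (H →L[ℂ] H))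
    (φ : X → X → (A →ₗ[ℂ] (H →L[ℂ] H))) (C : ℝ) (hC : 0 ≤ C) (hS : SchurBound ι φ C)
    {n : ℕ} (x y : Fin n → X) (h g : Fin n → H) (a : Fin n → Fin n → A)
    (hyp : ∀ ξ η : X → (H →ₗ[ℂ] H),
      (∑ i, ∑ j, inner ℂ (ξ (x i) (h i)) (ι (a i j) (η (y j) (g j)))).re ≤
        ∑ i, ‖ξ (x i) (h i)‖ ^ 2 + ∑ j, ‖η (y j) (g j)‖ ^ 2) :
    (∑ i, ∑ j, inner ℂ (h i) (φ (x i) (y j) (a i j) (g j))).re ≤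
      C * (∑ i, ‖h i‖ ^ 2 + ∑ j, ‖g j‖ ^ 2) := by
  obtain ⟨P, hP1, hP2, hP3⟩ := exists_proj' x h
  obtain ⟨Q, hQ1, hQ2, hQ3⟩ := exists_proj' y g
  let α : Fin n → Fin n → A := fun i j => ∑ k, ∑ l, ((starRingEnd ℂ) (P i k) * Q j l) • a k l
  have hre : ∀ w v : PiLp 2 (fun _ : Fin n => H),
      (∑ i, ∑ j, inner ℂ (w i) (ι (α i j) (v j))).re ≤ ‖w‖ ^ 2 + ‖v‖ ^ 2 := by
    intro w v
    let β : Fin n → Fin n → A →ₗ[ℂ] ℂ := fun i j =>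
      { toFun := fun a => inner ℂ (w i) (ι a (v j))
        map_add' := fun a b => by simp [inner_add_right]
        map_smul' := fun c a => by simp [inner_smul_right] }
    have e := expand β P Q a
    obtain ⟨ξ, hξ⟩ := hP2 w
    obtain ⟨η, hη⟩ := hQ2 v
    have e2 : ∑ i, ∑ j, inner ℂ (w i) (ι (α i j) (v j)) =
        ∑ k, ∑ l, inner ℂ (ξ (x k) (h k)) (ι (a k l) (η (y l) (g l))) := by
      refine e.trans ?_
      refine Finset.sum_congr rfl fun k _ => Finset.sum_congr rfl fun l _ => ?_
      rw [hξ, hη]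
      simp only [map_sum, map_smul, sum_inner, inner_sum, inner_smul_left, inner_smul_right]
      simp only [β, LinearMap.coe_mk, AddHom.coe_mk, Finset.mul_sum]
      rw [Finset.sum_comm]
      refine Finset.sum_congr rfl fun i _ => Finset.sum_congr rfl fun j _ => ?_
      ring
    rw [e2]
    refine (hyp ξ η).trans ?_
    simp only [hξ, hη]
    rw [PiLp.norm_sq_eq_of_L2, PiLp.norm_sq_eq_of_L2]
    exact add_le_add (hP3 _) (hQ3 _)
  have hnorm : ‖matOp (Matrix.of fun i j => ι (α i j))‖ ≤ 2 := by
    refine ContinuousLinearMap.opNorm_le_bound _ (by norm_num) fun v => ?_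
    set T := matOp (Matrix.of fun i j => ι (α i j)) with hT
    have := hre ((2⁻¹ : ℂ) • T v) v
    have e : ∑ i, ∑ j, inner ℂ (((2⁻¹ : ℂ) • T v) i) (ι (α i j) (v j)) =
        inner ℂ ((2⁻¹ : ℂ) • T v) (T v) := by
      exact (inner_matOp _ _ _).symm
    rw [e, inner_smul_left, inner_self_eq_norm_sq_to_K, norm_smul] at this
    have e3 : ((starRingEnd ℂ) (2⁻¹ : ℂ) * ((‖T v‖ : ℝ) : ℂ) ^ 2).re = 2⁻¹ * ‖T v‖ ^ 2 := by
      have : (starRingEnd ℂ) (2⁻¹ : ℂ) * ((‖T v‖ : ℝ) : ℂ) ^ 2 = ((2⁻¹ * ‖T v‖ ^ 2 : ℝ) : ℂ) := by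
        push_cast; simp; exact Or.inl (Complex.conj_ofNat 2)
      rw [this, Complex.ofReal_re]
    erw [e3] at this
    rw [show ‖(2⁻¹ : ℂ)‖ = 2⁻¹ by simp] at this
    refine le_of_sq_le_sq ?_ (by positivity)
    nlinarith
  have hfin := schurBound_extract ι φ C hC hS x y α 2 (by norm_num) (by
    intro w v
    refine (inner_matOp_le (Matrix.of fun i j => ι (α i j)) w v).trans ?_
    gcongr) (WithLp.toLp 2 h) (WithLp.toLp 2 g)
  let β : Fin n → Fin n → A →ₗ[ℂ] ℂ := fun i j =>
      { toFun := fun a => inner ℂ (h i) (φ (x i) (y j) a (g j))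
        map_add' := fun a b => by simp [inner_add_right]
        map_smul' := fun c a => by simp [inner_smul_right] }
  have e := expand β P Q a
  have e2 : ∑ i, ∑ j, inner ℂ (h i) (φ (x i) (y j) (α i j) (g j)) =
        ∑ k, ∑ l, inner ℂ (h k) (φ (x k) (y l) (a k l) (g l)) := by
    refine e.trans ?_
    refine Finset.sum_congr rfl fun k _ => Finset.sum_congr rfl fun l _ => ?_
    have s1 : ∀ i, ∑ j, Q j l * β i j (a k l) = inner ℂ (h i) (φ (x i) (y l) (a k l) (g l)) := by
      intro i
      exact hQ1 (fun y => (innerₛₗ ℂ (h i)) ∘ₗ (φ (x i) y (a k l)).toLinearMap) l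
    simp only [s1]
    have s2 := hP1 (fun x => innerₛₗ ℂ (φ x (y l) (a k l) (g l))) k
    have s3 := congrArg (starRingEnd ℂ) s2
    simpa [map_sum, map_mul, inner_conj_symm] using s3
  simp only [e2] at hfin
  refine (Complex.re_le_norm _).trans (hfin.trans ?_)
  have n1 : ‖(WithLp.toLp 2 h : PiLp 2 (fun _ : Fin n => H))‖ ^ 2 = ∑ i, ‖h i‖ ^ 2 :=
    PiLp.norm_sq_eq_of_L2 _ _
  have n2 : ‖(WithLp.toLp 2 g : PiLp 2 (fun _ : Fin n => H))‖ ^ 2 = ∑ i, ‖g i‖ ^ 2 :=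
    PiLp.norm_sq_eq_of_L2 _ _
  rw [← n1, ← n2]
  have := two_mul_le_add_sq ‖(WithLp.toLp 2 h : PiLp 2 (fun _ : Fin n => H))‖
    ‖(WithLp.toLp 2 g : PiLp 2 (fun _ : Fin n => H))‖
  nlinarith [mul_le_mul_of_nonneg_left this hC]
end
end SchurAux

namespace SchurAux

lemma hb {Ξ E : Type*} [AddCommGroup E] [Module ℝ E] (T : E →ₗ[ℝ] (Ξ → ℝ)) (F : E →ₗ[ℝ] ℝ)
    (P : (Ξ → ℝ) → ℝ → Prop) (h0 : P 0 0)
    (hadd : ∀ m t m' t', P m t → P m' t' → P (m + m') (t + t'))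
    (hsmul : ∀ m t (r : ℝ), 0 ≤ r → P m t → P (r • m) (r * t))
    (hpos : ∀ m t, P m t → 0 ≤ t)
    (hdom : ∀ d, ∃ m t, P m t ∧ ∀ ξ, |T d ξ| ≤ m ξ)
    (hF : ∀ d m t, P m t → (∀ ξ, T d ξ ≤ m ξ) → F d ≤ t) :
    ∃ L : (Ξ → ℝ) →ₗ[ℝ] ℝ, (∀ d, L (T d) = F d) ∧
      ∀ f m t, P m t → (∀ ξ, |f ξ| ≤ m ξ) → ∀ m' t', P m' t' → (∀ ξ, f ξ ≤ m' ξ) → L f ≤ t' := by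
  let D : Submodule ℝ (Ξ → ℝ) :=
    { carrier := {f | ∃ m t, P m t ∧ ∀ ξ, |f ξ| ≤ m ξ}
      zero_mem' := ⟨0, 0, h0, by simp⟩
      add_mem' := by
        rintro f g ⟨m, t, h, hf⟩ ⟨m', t', h', hg⟩
        exact ⟨_, _, hadd _ _ _ _ h h', fun ξ =>
          (abs_add_le _ _).trans (add_le_add (hf ξ) (hg ξ))⟩
      smul_mem' := by
        rintro r f ⟨m, t, h, hf⟩
        refine ⟨_, _, hsmul _ _ |r| (abs_nonneg _) h, fun ξ => ?_⟩
        simp only [Pi.smul_apply, smul_eq_mul, abs_mul]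
        exact mul_le_mul_of_nonneg_left (hf ξ) (abs_nonneg _) }
  let S : D → Set ℝ := fun f => {t | ∃ m, P m t ∧ ∀ ξ, f.1 ξ ≤ m ξ}
  have hSne : ∀ f, (S f).Nonempty := by
    rintro ⟨f, m, t, h, hf⟩
    exact ⟨t, m, h, fun ξ => (le_abs_self _).trans (hf ξ)⟩
  have hSbd : ∀ f, BddBelow (S f) := fun f => ⟨0, by rintro t ⟨m, h, -⟩; exact hpos _ _ h⟩
  let p : D → ℝ := fun f => sInf (S f)
  have hp_le : ∀ f t, t ∈ S f → p f ≤ t := fun f t ht => csInf_le (hSbd f) ht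
  have hp_add : ∀ f g, p (f + g) ≤ p f + p g := by
    intro f g
    have : ∀ t ∈ S f, ∀ t' ∈ S g, p (f + g) ≤ t + t' := by
      rintro t ⟨m, h, hm⟩ t' ⟨m', h', hm'⟩
      exact hp_le _ _ ⟨_, hadd _ _ _ _ h h', fun ξ => add_le_add (hm ξ) (hm' ξ)⟩
    have h1 : ∀ t ∈ S f, p (f + g) - t ≤ p g := fun t ht =>
      le_csInf (hSne g) fun t' ht' => by have := this t ht t' ht'; linarith
    have h2 : p (f + g) - p g ≤ p f := le_csInf (hSne f) fun t ht => by
      have := h1 t ht; linarith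
    linarith
  have hp_hom_le : ∀ c : ℝ, 0 < c → ∀ f, p (c • f) ≤ c * p f := by
    intro c hc f
    have : c⁻¹ * p (c • f) ≤ p f := le_csInf (hSne f) fun t ⟨m, h, hm⟩ => by
      have : p (c • f) ≤ c * t := hp_le _ _ ⟨_, hsmul _ _ c hc.le h, fun ξ =>
        mul_le_mul_of_nonneg_left (hm ξ) hc.le⟩
      rw [inv_mul_le_iff₀ hc]; exact this
    rwa [inv_mul_le_iff₀ hc] at this
  have hp_hom : ∀ c : ℝ, 0 < c → ∀ f, p (c • f) = c * p f := by
    intro c hc f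
    refine le_antisymm (hp_hom_le c hc f) ?_
    have := hp_hom_le c⁻¹ (inv_pos.mpr hc) (c • f)
    rw [inv_smul_smul₀ hc.ne'] at this
    rwa [le_inv_mul_iff₀ hc] at this
  let T' : E →ₗ[ℝ] D := T.codRestrict D hdom
  have hFp : ∀ d, F d ≤ p (T' d) := fun d => le_csInf (hSne _) fun t ⟨m, h, hm⟩ => hF d m t h hm
  have hp0 : p 0 = 0 := le_antisymm (hp_le 0 0 ⟨0, h0, by simp⟩)
    (le_csInf (hSne 0) (by rintro t ⟨m, h, -⟩; exact hpos _ _ h))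
  obtain ⟨F', hF'⟩ := exists_factor T' F (fun d hd => by
    have h1 := hFp d
    have h2 := hFp (-d)
    rw [map_neg, map_neg, hd, neg_zero, hp0] at h2
    rw [hd, hp0] at h1
    linarith)
  obtain ⟨g, hg1, hg2⟩ := exists_extension_of_le_sublinear
    (⟨LinearMap.range T', F' ∘ₗ (LinearMap.range T').subtype⟩ : D →ₗ.[ℝ] ℝ) p hp_hom hp_add (by
      rintro ⟨_, d, rfl⟩
      exact (hF' d).le.trans (hFp d))
  obtain ⟨L, hL⟩ := LinearMap.exists_extend g
  have hL' : ∀ f : D, L f = g f := fun f => by rw [← hL]; rfl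
  refine ⟨L, fun d => ?_, ?_⟩
  · have : L (T d) = g (T' d) := hL' (T' d)
    rw [this, hg1 ⟨T' d, d, rfl⟩]
    exact hF' d
  · intro f m t h hf m' t' h' hf'
    rw [hL' ⟨f, m, t, h, hf⟩]
    exact (hg2 _).trans (hp_le _ _ ⟨m', h', hf'⟩)

section
variable {X : Type*} {H : Type*} [NormedAddCommGroup H] [InnerProductSpace ℂ H]
    [CompleteSpace H] {A : Type*} [NonUnitalCStarAlgebra A]

lemma key_finset (ι : A →⋆ₙₐ[ℂ] (H →L[ℂ] H))
    (φ : X → X → (A →ₗ[ℂ] (H →L[ℂ] H))) (C : ℝ) (hC : 0 ≤ C) (hS : SchurBound ι φ C)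
    (s : Finset (X × H)) (cL cR : X × H → ℝ) (hL : ∀ i, 0 < cL i) (hR : ∀ i, 0 < cR i)
    (a : X × H → X × H → A)
    (hyp : ∀ ξ η : X → (H →ₗ[ℂ] H),
      ∑ i ∈ s, ∑ j ∈ s, (inner ℂ (ξ i.1 i.2) (ι (a i j) (η j.1 j.2))).re ≤
        ∑ i ∈ s, cL i * ‖ξ i.1 i.2‖ ^ 2 + ∑ j ∈ s, cR j * ‖η j.1 j.2‖ ^ 2) :
    ∑ i ∈ s, ∑ j ∈ s, (inner ℂ i.2 (φ i.1 j.1 (a i j) j.2)).re ≤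
      C * (∑ i ∈ s, cL i * ‖i.2‖ ^ 2 + ∑ j ∈ s, cR j * ‖j.2‖ ^ 2) := by
  let e := s.equivFin
  let u : Fin s.card → X × H := fun k => (e.symm k).1
  have hsum : ∀ {G : Type} [AddCommMonoid G] (f : X × H → G), ∑ i ∈ s, f i = ∑ k, f (u k) := by
    intro G _ f
    rw [← Finset.sum_coe_sort s f]
    exact (Equiv.sum_comp e.symm (fun i => f i.1)).symm
  have sq : ∀ r : ℝ, 0 < r → ∀ v : H, ‖((√r : ℝ) : ℂ) • v‖ ^ 2 = r * ‖v‖ ^ 2 := by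
    intro r hr v
    rw [norm_smul, mul_pow, Complex.norm_real, Real.norm_eq_abs, sq_abs, Real.sq_sqrt hr.le]
  have ne : ∀ r : ℝ, 0 < r → ((√r : ℝ) : ℂ) ≠ 0 := fun r hr => by
    exact_mod_cast (Real.sqrt_pos.mpr hr).ne'
  have can : ∀ i j (v w : H) (ψ : A →ₗ[ℂ] (H →L[ℂ] H)),
      inner ℂ (((√(cL i) : ℝ) : ℂ) • v) (ψ
        ((((√(cL i) : ℝ) : ℂ)⁻¹ * ((√(cR j) : ℝ) : ℂ)⁻¹) • a i j) (((√(cR j) : ℝ) : ℂ) • w))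
      = inner ℂ v (ψ (a i j) w) := by
    intro i j v w ψ
    simp only [map_smul, _root_.smul_apply, inner_smul_left, inner_smul_right, Complex.conj_ofReal]
    have h1 := ne _ (hL i)
    have h2 := ne _ (hR j)
    field_simp
  have := key_fin ι φ C hC hS (fun k => (u k).1) (fun k => (u k).1)
    (fun k => ((√(cL (u k)) : ℝ) : ℂ) • (u k).2) (fun k => ((√(cR (u k)) : ℝ) : ℂ) • (u k).2)
    (fun k l => (((√(cL (u k)) : ℝ) : ℂ)⁻¹ * ((√(cR (u l)) : ℝ) : ℂ)⁻¹) • a (u k) (u l)) (by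
      intro ξ η
      have := hyp ξ η
      simp only [hsum] at this
      simp only [map_smul (ξ _), map_smul (η _), sq _ (hL _), sq _ (hR _)]
      rw [Complex.re_sum]
      simp only [Complex.re_sum]
      refine le_trans (le_of_eq ?_) this
      refine Finset.sum_congr rfl fun k _ => Finset.sum_congr rfl fun l _ => ?_
      exact congrArg Complex.re (can (u k) (u l) _ _
        (ι : A →ₗ[ℂ] (H →L[ℂ] H))))
  simp only [sq _ (hL _), sq _ (hR _), can, Complex.re_sum] at this
  simpa only [hsum] using this

lemma key_finset' (ι : A →⋆ₙₐ[ℂ] (H →L[ℂ] H))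
    (φ : X → X → (A →ₗ[ℂ] (H →L[ℂ] H))) (C : ℝ) (hC : 0 ≤ C) (hS : SchurBound ι φ C)
    (s : Finset (X × H)) (cL cR : X × H → ℝ) (hL : ∀ i, 0 ≤ cL i) (hR : ∀ i, 0 ≤ cR i)
    (a : X × H → X × H → A)
    (hyp : ∀ ξ η : X → (H →ₗ[ℂ] H),
      ∑ i ∈ s, ∑ j ∈ s, (inner ℂ (ξ i.1 i.2) (ι (a i j) (η j.1 j.2))).re ≤
        ∑ i ∈ s, cL i * ‖ξ i.1 i.2‖ ^ 2 + ∑ j ∈ s, cR j * ‖η j.1 j.2‖ ^ 2) :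
    ∑ i ∈ s, ∑ j ∈ s, (inner ℂ i.2 (φ i.1 j.1 (a i j) j.2)).re ≤
      C * (∑ i ∈ s, cL i * ‖i.2‖ ^ 2 + ∑ j ∈ s, cR j * ‖j.2‖ ^ 2) := by
  have key : ∀ ε : ℝ, 0 < ε → ∑ i ∈ s, ∑ j ∈ s, (inner ℂ i.2 (φ i.1 j.1 (a i j) j.2)).re ≤
      C * (∑ i ∈ s, cL i * ‖i.2‖ ^ 2 + ∑ j ∈ s, cR j * ‖j.2‖ ^ 2)
        + ε * (C * (∑ i ∈ s, ‖i.2‖ ^ 2 + ∑ j ∈ s, ‖j.2‖ ^ 2)) := by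
    intro ε hε
    have := key_finset ι φ C hC hS s (fun i => cL i + ε) (fun i => cR i + ε)
      (fun i => by have := hL i; positivity) (fun i => by have := hR i; positivity) a (by
        intro ξ η
        refine (hyp ξ η).trans ?_
        gcongr <;> linarith)
    refine this.trans (le_of_eq ?_)
    simp only [add_mul, Finset.sum_add_distrib, ← Finset.mul_sum]
    ring
  have hlim : Filter.Tendsto (fun ε : ℝ => C * (∑ i ∈ s, cL i * ‖i.2‖ ^ 2 + ∑ j ∈ s, cR j * ‖j.2‖ ^ 2)
        + ε * (C * (∑ i ∈ s, ‖i.2‖ ^ 2 + ∑ j ∈ s, ‖j.2‖ ^ 2))) (nhdsWithin 0 (Set.Ioi 0))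
      (nhds (C * (∑ i ∈ s, cL i * ‖i.2‖ ^ 2 + ∑ j ∈ s, cR j * ‖j.2‖ ^ 2)
        + 0 * (C * (∑ i ∈ s, ‖i.2‖ ^ 2 + ∑ j ∈ s, ‖j.2‖ ^ 2)))) := by
    refine Filter.Tendsto.mono_left (Continuous.tendsto (by fun_prop) 0) nhdsWithin_le_nhds
  rw [zero_mul, add_zero] at hlim
  exact ge_of_tendsto hlim (Filter.eventually_of_mem self_mem_nhdsWithin fun ε hε => key ε hε)
end
end SchurAux

namespace SchurAux

section
variable {X : Type*} {H : Type*} [NormedAddCommGroup H] [InnerProductSpace ℂ H]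

/-- dominated pairs -/
def Dom {Ξ : Type*} (lf rf : Ξ → X → (H →ₗ[ℂ] H)) (C : ℝ) (m : Ξ → ℝ) (t : ℝ) : Prop :=
  ∃ cL cR : X × H →₀ ℝ, (∀ i, 0 ≤ cL i) ∧ (∀ i, 0 ≤ cR i) ∧
    m = Finsupp.linearCombination ℝ (fun s : X × H => fun ξ => ‖lf ξ s.1 s.2‖ ^ 2) cL +
      Finsupp.linearCombination ℝ (fun s : X × H => fun ξ => ‖rf ξ s.1 s.2‖ ^ 2) cR ∧
    t = C * (Finsupp.linearCombination ℝ (fun s : X × H => ‖s.2‖ ^ 2) cL +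
      Finsupp.linearCombination ℝ (fun s : X × H => ‖s.2‖ ^ 2) cR)

variable {Ξ : Type*} {lf rf : Ξ → X → (H →ₗ[ℂ] H)} {C : ℝ}

lemma Dom.zero : Dom lf rf C 0 0 := ⟨0, 0, by simp, by simp, by simp, by simp⟩

lemma Dom.add {m t m' t'} (h : Dom lf rf C m t) (h' : Dom lf rf C m' t') :
    Dom lf rf C (m + m') (t + t') := by
  obtain ⟨a, b, ha, hb, rfl, rfl⟩ := h
  obtain ⟨a', b', ha', hb', rfl, rfl⟩ := h'
  refine ⟨a + a', b + b', fun i => add_nonneg (ha i) (ha' i), fun i => add_nonneg (hb i) (hb' i),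
    ?_, ?_⟩
  · simp only [map_add]; abel
  · simp only [map_add]; ring

lemma Dom.smul {m t} (h : Dom lf rf C m t) (r : ℝ) (hr : 0 ≤ r) :
    Dom lf rf C (r • m) (r * t) := by
  obtain ⟨a, b, ha, hb, rfl, rfl⟩ := h
  refine ⟨r • a, r • b, fun i => mul_nonneg hr (ha i), fun i => mul_nonneg hr (hb i),
    ?_, ?_⟩
  · simp only [map_smul, smul_add]
  · simp only [map_smul, smul_eq_mul]; ring

lemma linComb_nonneg {I : Type*} (c : I →₀ ℝ) (hc : ∀ i, 0 ≤ c i) (q : I → ℝ) (hq : ∀ i, 0 ≤ q i) :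
    0 ≤ Finsupp.linearCombination ℝ q c := by
  rw [Finsupp.linearCombination_apply]
  exact Finset.sum_nonneg fun i _ => mul_nonneg (hc i) (hq i)

lemma Dom.nonneg (hC : 0 ≤ C) {m t} (h : Dom lf rf C m t) : 0 ≤ t := by
  obtain ⟨a, b, ha, hb, rfl, rfl⟩ := h
  have := linComb_nonneg a ha (fun s : X × H => ‖s.2‖ ^ 2) (fun _ => by positivity)
  have := linComb_nonneg b hb (fun s : X × H => ‖s.2‖ ^ 2) (fun _ => by positivity)
  positivity

lemma Dom.left (x : X) (h : H) : Dom lf rf C (fun ξ => ‖lf ξ x h‖ ^ 2) (C * ‖h‖ ^ 2) := by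
  classical
  refine ⟨Finsupp.single (x, h) 1, 0, fun i => ?_, by simp, by simp, by simp⟩
  rw [Finsupp.single_apply]; split_ifs <;> simp

lemma Dom.right (x : X) (h : H) : Dom lf rf C (fun ξ => ‖rf ξ x h‖ ^ 2) (C * ‖h‖ ^ 2) := by
  classical
  refine ⟨0, Finsupp.single (x, h) 1, by simp, fun i => ?_, by simp, by simp⟩
  rw [Finsupp.single_apply]; split_ifs <;> simp
end

section
variable {X : Type*} {H : Type*} [NormedAddCommGroup H] [InnerProductSpace ℂ H]
    [CompleteSpace H] {A : Type*} [NonUnitalCStarAlgebra A]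

/-- sesquilinear evaluation, linear in `a`, real part -/
def reEval (ψ : A →ₗ[ℂ] (H →L[ℂ] H)) (v w : H) : A →ₗ[ℝ] ℝ :=
  Complex.reLm ∘ₗ (LinearMap.restrictScalars ℝ
    { toFun := fun a => inner ℂ v (ψ a w)
      map_add' := fun a b => by simp [inner_add_right]
      map_smul' := fun c a => by simp [inner_smul_right] : A →ₗ[ℂ] ℂ })

lemma reEval_apply (ψ : A →ₗ[ℂ] (H →L[ℂ] H)) (v w : H) (a : A) :
    reEval ψ v w a = (inner ℂ v (ψ a w)).re := rfl

lemma exists_L (ι : A →⋆ₙₐ[ℂ] (H →L[ℂ] H))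
    (φ : X → X → (A →ₗ[ℂ] (H →L[ℂ] H))) (C : ℝ) (hC : 0 ≤ C) (hS : SchurBound ι φ C)
    {Ξ : Type*} (lf rf : Ξ → X → (H →ₗ[ℂ] H)) (hΞ : ∀ ξ η, ∃ z, lf z = ξ ∧ rf z = η) :
    ∃ L : (Ξ → ℝ) →ₗ[ℝ] ℝ,
      (∀ x y h g a, L (fun z => (inner ℂ (lf z x h) (ι a (rf z y g))).re) =
        (inner ℂ h (φ x y a g)).re) ∧
      ∀ f m t, Dom lf rf C m t → (∀ ξ, |f ξ| ≤ m ξ) →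
        ∀ m' t', Dom lf rf C m' t' → (∀ ξ, f ξ ≤ m' ξ) → L f ≤ t' := by
  classical
  let T : (((X × H) × (X × H)) →₀ A) →ₗ[ℝ] (Ξ → ℝ) :=
    Finsupp.lsum ℝ fun p => LinearMap.pi fun z =>
      reEval (ι : A →ₗ[ℂ] (H →L[ℂ] H)) (lf z p.1.1 p.1.2) (rf z p.2.1 p.2.2)
  let F : (((X × H) × (X × H)) →₀ A) →ₗ[ℝ] ℝ :=
    Finsupp.lsum ℝ fun p => reEval (φ p.1.1 p.2.1) p.1.2 p.2.2
  have hTs : ∀ p a z, T (Finsupp.single p a) z =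
      (inner ℂ (lf z p.1.1 p.1.2) (ι a (rf z p.2.1 p.2.2))).re := by
    intro p a z
    simp only [T, Finsupp.lsum_single]
    rfl
  have hFs : ∀ p a, F (Finsupp.single p a) = (inner ℂ p.1.2 (φ p.1.1 p.2.1 a p.2.2)).re := by
    intro p a
    simp only [F, Finsupp.lsum_single]
    rfl
  obtain ⟨L, hL1, hL2⟩ := hb T F (Dom lf rf C) Dom.zero (fun _ _ _ _ => Dom.add)
    (fun _ _ r hr h => h.smul r hr) (fun _ _ h => h.nonneg hC) (by
      intro d
      induction d using Finsupp.induction_linear with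
      | zero => exact ⟨0, 0, Dom.zero, by simp⟩
      | add f g hf hg =>
        obtain ⟨m, t, h, hm⟩ := hf
        obtain ⟨m', t', h', hm'⟩ := hg
        refine ⟨_, _, h.add h', fun ξ => ?_⟩
        rw [map_add]
        exact (abs_add_le _ _).trans (add_le_add (hm ξ) (hm' ξ))
      | single p a =>
        refine ⟨_, _, ((Dom.left p.1.1 p.1.2).add (Dom.right p.2.1 p.2.2)).smul ‖ι a‖
          (norm_nonneg _), fun z => ?_⟩
        rw [hTs]
        refine (Complex.abs_re_le_norm _).trans ((norm_inner_le_norm _ _).trans ?_)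
        simp only [Pi.smul_apply, Pi.add_apply, smul_eq_mul]
        have h1 := (ι a).le_opNorm (rf z p.2.1 p.2.2)
        set α := ‖lf z p.1.1 p.1.2‖
        set β := ‖rf z p.2.1 p.2.2‖
        calc α * ‖ι a (rf z p.2.1 p.2.2)‖ ≤ α * (‖ι a‖ * β) := by gcongr
          _ = ‖ι a‖ * (α * β) := by ring
          _ ≤ ‖ι a‖ * (α ^ 2 + β ^ 2) := by
            gcongr
            nlinarith [sq_nonneg (α - β), sq_nonneg α, sq_nonneg β]) (by
      intro d m t hm hle
      obtain ⟨cL, cR, hcL, hcR, rfl, rfl⟩ := hm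
      let s : Finset (X × H) := d.support.image Prod.fst ∪ d.support.image Prod.snd ∪
        cL.support ∪ cR.support
      have hsL : cL.support ⊆ s := by intro i hi; simp only [s, Finset.mem_union]; tauto
      have hsR : cR.support ⊆ s := by intro i hi; simp only [s, Finset.mem_union]; tauto
      have hsd : d.support ⊆ s ×ˢ s := by
        intro p hp
        rw [Finset.mem_product]
        have h1 := Finset.mem_image_of_mem Prod.fst hp
        have h2 := Finset.mem_image_of_mem Prod.snd hp
        simp only [s, Finset.mem_union]; tauto
      have eL : ∀ q : X × H → ℝ, Finsupp.linearCombination ℝ q cL = ∑ i ∈ s, cL i * q i := by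
        intro q
        rw [Finsupp.linearCombination_apply, Finsupp.sum_of_support_subset _ hsL _ (by simp)]
        rfl
      have eR : ∀ q : X × H → ℝ, Finsupp.linearCombination ℝ q cR = ∑ i ∈ s, cR i * q i := by
        intro q
        rw [Finsupp.linearCombination_apply, Finsupp.sum_of_support_subset _ hsR _ (by simp)]
        rfl
      have eL' : ∀ (q : X × H → Ξ → ℝ) z, Finsupp.linearCombination ℝ q cL z =
          ∑ i ∈ s, cL i * q i z := by
        intro q z
        rw [Finsupp.linearCombination_apply, Finsupp.sum_of_support_subset _ hsL _ (by simp),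
          Finset.sum_apply]
        rfl
      have eR' : ∀ (q : X × H → Ξ → ℝ) z, Finsupp.linearCombination ℝ q cR z =
          ∑ i ∈ s, cR i * q i z := by
        intro q z
        rw [Finsupp.linearCombination_apply, Finsupp.sum_of_support_subset _ hsR _ (by simp),
          Finset.sum_apply]
        rfl
      have eT : ∀ z, T d z = ∑ i ∈ s, ∑ j ∈ s,
          (inner ℂ (lf z i.1 i.2) (ι (d (i, j)) (rf z j.1 j.2))).re := by
        intro z
        simp only [T, Finsupp.lsum_apply]
        rw [Finsupp.sum_of_support_subset _ hsd _ (by simp), Finset.sum_product, Finset.sum_apply]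
        refine Finset.sum_congr rfl fun i _ => ?_
        rw [Finset.sum_apply]
        rfl
      have eF : F d = ∑ i ∈ s, ∑ j ∈ s, (inner ℂ i.2 (φ i.1 j.1 (d (i, j)) j.2)).re := by
        simp only [F, Finsupp.lsum_apply]
        rw [Finsupp.sum_of_support_subset _ hsd _ (by simp), Finset.sum_product]
        rfl
      rw [eF, eL, eR]
      refine key_finset' ι φ C hC hS s cL cR hcL hcR (fun i j => d (i, j)) ?_
      intro ξ η
      obtain ⟨z, rfl, rfl⟩ := hΞ ξ η
      have := hle z
      rwa [eT, Pi.add_apply, eL', eR'] at this)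
  refine ⟨L, fun x y h g a => ?_, hL2⟩
  have h1 := hL1 (Finsupp.single ((x, h), (y, g)) a)
  rw [hFs] at h1
  rw [← h1]
  congr 1
  ext z
  exact (hTs ((x, h), (y, g)) a z).symm
end
end SchurAux

namespace SchurAux

/-- data for the GNS construction -/
structure GData (Ξ : Type*) where
  P : (Ξ → ℝ) → ℝ → Prop
  L : (Ξ → ℝ) →ₗ[ℝ] ℝ
  zero : P 0 0
  add : ∀ m t m' t', P m t → P m' t' → P (m + m') (t + t')
  smul : ∀ m t (r : ℝ), 0 ≤ r → P m t → P (r • m) (r * t)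
  le : ∀ f m t, P m t → (∀ ξ, |f ξ| ≤ m ξ) → ∀ m' t', P m' t' → (∀ ξ, f ξ ≤ m' ξ) → L f ≤ t'

section
open UniformSpace
variable {E : Type*} [SeminormedAddCommGroup E] [InnerProductSpace ℂ E]
  {A : Type*} [NonUnitalCStarAlgebra A]

lemma completion_clm_ext (S T : Completion E →L[ℂ] Completion E)
    (h : ∀ w : E, S (w : Completion E) = T (w : Completion E)) : S = T := by
  ext v
  exact congrFun (Completion.ext S.continuous T.continuous h) v

lemma completion_coe_op (S : E →L[ℂ] E) (w : E) : S.completion (w : Completion E) = (S w : E) := by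
  simp

/-- extend a star representation to the completion -/
def completionRep (op : A → (E →L[ℂ] E)) (hs : ∀ (c : ℂ) a w, op (c • a) w = c • op a w)
    (ha : ∀ a b w, op (a + b) w = op a w + op b w)
    (hm : ∀ a b w, op (a * b) w = op a (op b w))
    (hst : ∀ a w w', inner ℂ (op (star a) w) w' = inner ℂ w (op a w')) :
    A →⋆ₙₐ[ℂ] (Completion E →L[ℂ] Completion E) where
  toFun a := (op a).completion
  map_smul' c a := completion_clm_ext _ _ fun w => by
    simp [completion_coe_op, hs]
  map_zero' := completion_clm_ext _ _ fun w => by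
    have := hs 0 0 w
    simp only [zero_smul] at this
    simp [this, Completion.coe_zero]
  map_add' a b := completion_clm_ext _ _ fun w => by
    simp [completion_coe_op, ha, Completion.coe_add]
  map_mul' a b := completion_clm_ext _ _ fun w => by
    simp [completion_coe_op, hm]
  map_star' a := by
    refine (ContinuousLinearMap.eq_adjoint_iff _ _).mpr fun v v' => ?_
    induction v, v' using Completion.induction_on₂ with
    | hp => apply isClosed_eq <;> fun_prop
    | ih x y => simp [hst]
end

section
variable {Ξ : Type*} (D : GData Ξ)

/-- complexified functional -/
def GData.Lc : (Ξ → ℂ) →ₗ[ℂ] ℂ where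
  toFun u := (D.L (fun ξ => (u ξ).re) : ℂ) + Complex.I * (D.L (fun ξ => (u ξ).im) : ℂ)
  map_add' u v := by
    have h1 : (fun ξ => ((u + v) ξ).re) = (fun ξ => (u ξ).re) + fun ξ => (v ξ).re := by
      ext ξ; simp
    have h2 : (fun ξ => ((u + v) ξ).im) = (fun ξ => (u ξ).im) + fun ξ => (v ξ).im := by
      ext ξ; simp
    rw [h1, h2, map_add, map_add]; push_cast; ring
  map_smul' c u := by
    have h1 : (fun ξ => ((c • u) ξ).re) = c.re • (fun ξ => (u ξ).re) - c.im • fun ξ => (u ξ).im := by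
      ext ξ; simp
    have h2 : (fun ξ => ((c • u) ξ).im) = c.re • (fun ξ => (u ξ).im) + c.im • fun ξ => (u ξ).re := by
      ext ξ; simp
    rw [h1, h2, map_sub, map_add, map_smul, map_smul, map_smul, map_smul]
    apply Complex.ext <;> simp <;> ring

lemma GData.Lc_re (u : Ξ → ℂ) : (D.Lc u).re = D.L (fun ξ => (u ξ).re) := by
  simp [GData.Lc]

lemma GData.Lc_im (u : Ξ → ℂ) : (D.Lc u).im = D.L (fun ξ => (u ξ).im) := by
  simp [GData.Lc]

lemma GData.Lc_conj (u : Ξ → ℂ) :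
    D.Lc (fun ξ => (starRingEnd ℂ) (u ξ)) = (starRingEnd ℂ) (D.Lc u) := by
  apply Complex.ext
  · rw [Complex.conj_re, Lc_re, Lc_re]; simp
  · rw [Complex.conj_im, Lc_im, Lc_im, ← map_neg]; congr 1

lemma GData.nonneg (f : Ξ → ℝ) (hf : ∀ ξ, 0 ≤ f ξ) (m : Ξ → ℝ) (t : ℝ) (hm : D.P m t)
    (h : ∀ ξ, f ξ ≤ m ξ) : 0 ≤ D.L f := by
  have := D.le (-f) m t hm (fun ξ => by simpa [abs_of_nonneg (hf ξ)] using h ξ) 0 0 D.zero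
    (fun ξ => by simpa using hf ξ)
  rw [map_neg] at this
  linarith

variable (H : Type*) [NormedAddCommGroup H] [InnerProductSpace ℂ H]

/-- dominated functions -/
def GData.Q : Submodule ℂ (Ξ → H) where
  carrier := {w | ∃ m t, D.P m t ∧ ∀ ξ, ‖w ξ‖ ^ 2 ≤ m ξ}
  zero_mem' := ⟨0, 0, D.zero, by simp⟩
  add_mem' := by
    rintro w w' ⟨m, t, h, hm⟩ ⟨m', t', h', hm'⟩
    refine ⟨_, _, D.smul _ _ 2 (by norm_num) (D.add _ _ _ _ h h'), fun ξ => ?_⟩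
    have h1 := norm_add_le (w ξ) (w' ξ)
    have h2 := hm ξ
    have h3 := hm' ξ
    simp only [Pi.smul_apply, Pi.add_apply, smul_eq_mul]
    nlinarith [norm_nonneg (w ξ + w' ξ), sq_nonneg (‖w ξ‖ - ‖w' ξ‖), norm_nonneg (w ξ),
      norm_nonneg (w' ξ)]
  smul_mem' := by
    rintro c w ⟨m, t, h, hm⟩
    refine ⟨_, _, D.smul _ _ (‖c‖ ^ 2) (by positivity) h, fun ξ => ?_⟩
    simp only [Pi.smul_apply, smul_eq_mul, norm_smul, mul_pow]
    exact mul_le_mul_of_nonneg_left (hm ξ) (by positivity)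

/-- type synonym carrying the semi-inner product -/
def GData.Pre : Type _ := D.Q H

instance : AddCommGroup (D.Pre H) := inferInstanceAs (AddCommGroup (D.Q H))
instance : Module ℂ (D.Pre H) := inferInstanceAs (Module ℂ (D.Q H))

variable {H}
/-- underlying function -/
def GData.fn : D.Pre H →ₗ[ℂ] (Ξ → H) := (D.Q H).subtype
/-- constructor -/
def GData.mk' (w : Ξ → H) (hw : w ∈ D.Q H) : D.Pre H := ⟨w, hw⟩
@[simp] lemma GData.fn_mk' (w : Ξ → H) (hw : w ∈ D.Q H) : D.fn (D.mk' w hw) = w := rfl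
lemma GData.fn_mem (w : D.Pre H) : ∃ m t, D.P m t ∧ ∀ ξ, ‖D.fn w ξ‖ ^ 2 ≤ m ξ := w.2
lemma GData.fn_inj {w w' : D.Pre H} (h : D.fn w = D.fn w') : w = w' := Subtype.ext h
variable (H)

/-- semi-inner product -/
abbrev GData.core : PreInnerProductSpace.Core ℂ (D.Pre H) where
  inner w w' := D.Lc (fun ξ => inner ℂ (D.fn w ξ) (D.fn w' ξ))
  conj_inner_symm w w' := by
    rw [← D.Lc_conj]; simp only [inner_conj_symm]
  re_inner_nonneg w := by
    change 0 ≤ (D.Lc _).re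
    rw [D.Lc_re]
    obtain ⟨m, t, h, hm⟩ := D.fn_mem w
    have e : ∀ ξ, (inner ℂ (D.fn w ξ) (D.fn w ξ)).re = ‖D.fn w ξ‖ ^ 2 := fun ξ => by
      rw [inner_self_eq_norm_sq_to_K]; norm_cast
    simp only [e]
    exact D.nonneg _ (fun ξ => by positivity) m t h hm
  add_left w w' v := by
    rw [← map_add]
    congr 1; ext ξ
    simp [inner_add_left]
  smul_left w v c := by
    rw [← smul_eq_mul, ← map_smul]
    congr 1; ext ξ
    simp [inner_smul_left, mul_comm]

instance : SeminormedAddCommGroup (D.Pre H) :=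
  InnerProductSpace.Core.toSeminormedAddCommGroup (c := D.core H)
instance : InnerProductSpace ℂ (D.Pre H) := InnerProductSpace.ofCore (D.core H)

variable {H}
lemma GData.inner_def (w w' : D.Pre H) :
    inner ℂ w w' = D.Lc (fun ξ => inner ℂ (D.fn w ξ) (D.fn w' ξ)) := rfl

lemma GData.norm_sq (w : D.Pre H) : ‖w‖ ^ 2 = D.L (fun ξ => ‖D.fn w ξ‖ ^ 2) := by
  have h1 : (inner ℂ w w).re = ‖w‖ ^ 2 := by
    rw [inner_self_eq_norm_sq_to_K]; norm_cast
  rw [← h1, D.inner_def, D.Lc_re]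
  congr 1; ext ξ
  rw [inner_self_eq_norm_sq_to_K]; norm_cast

lemma GData.norm_sq_le (w : D.Pre H) (m : Ξ → ℝ) (t : ℝ) (hm : D.P m t)
    (h : ∀ ξ, ‖D.fn w ξ‖ ^ 2 ≤ m ξ) : ‖w‖ ^ 2 ≤ t := by
  rw [D.norm_sq]
  refine D.le _ m t hm (fun ξ => ?_) m t hm h
  rw [abs_of_nonneg (by positivity)]; exact h ξ

/-- pointwise action of an operator -/
def GData.opLin (T : H →L[ℂ] H) : D.Pre H →ₗ[ℂ] D.Pre H where
  toFun w := D.mk' (fun ξ => T (D.fn w ξ)) (by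
    obtain ⟨m, t, h, hm⟩ := D.fn_mem w
    refine ⟨_, _, D.smul _ _ (‖T‖ ^ 2) (by positivity) h, fun ξ => ?_⟩
    calc ‖T (D.fn w ξ)‖ ^ 2 ≤ (‖T‖ * ‖D.fn w ξ‖) ^ 2 := by gcongr; exact T.le_opNorm _
      _ = ‖T‖ ^ 2 * ‖D.fn w ξ‖ ^ 2 := by ring
      _ ≤ ‖T‖ ^ 2 * m ξ := mul_le_mul_of_nonneg_left (hm ξ) (by positivity))
  map_add' w w' := D.fn_inj (by ext ξ; simp)
  map_smul' c w := D.fn_inj (by ext ξ; simp)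

lemma GData.fn_opLin (T : H →L[ℂ] H) (w : D.Pre H) (ξ : Ξ) :
    D.fn (D.opLin T w) ξ = T (D.fn w ξ) := rfl

lemma GData.norm_opLin (T : H →L[ℂ] H) (w : D.Pre H) : ‖D.opLin T w‖ ≤ ‖T‖ * ‖w‖ := by
  refine le_of_sq_le_sq ?_ (by positivity)
  rw [mul_pow, D.norm_sq, D.norm_sq, ← smul_eq_mul, ← map_smul]
  obtain ⟨m, t, h, hm⟩ := D.fn_mem w
  have hT : ∀ ξ, ‖T (D.fn w ξ)‖ ^ 2 ≤ ‖T‖ ^ 2 * ‖D.fn w ξ‖ ^ 2 := fun ξ => by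
    rw [← mul_pow]; gcongr; exact T.le_opNorm _
  have := D.nonneg (‖T‖ ^ 2 • (fun ξ => ‖D.fn w ξ‖ ^ 2) - fun ξ => ‖D.fn (D.opLin T w) ξ‖ ^ 2)
    (fun ξ => by
      simp only [Pi.sub_apply, Pi.smul_apply, smul_eq_mul, D.fn_opLin]
      linarith [hT ξ]) _ _ (D.smul _ _ (‖T‖ ^ 2) (by positivity) h) (fun ξ => by
      simp only [Pi.sub_apply, Pi.smul_apply, smul_eq_mul]
      have := mul_le_mul_of_nonneg_left (hm ξ) (sq_nonneg ‖T‖)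
      nlinarith [sq_nonneg ‖D.fn (D.opLin T w) ξ‖])
  rw [map_sub] at this
  linarith

/-- bounded pointwise action -/
def GData.op (T : H →L[ℂ] H) : D.Pre H →L[ℂ] D.Pre H :=
  (D.opLin T).mkContinuous ‖T‖ (D.norm_opLin T)

lemma GData.fn_op (T : H →L[ℂ] H) (w : D.Pre H) (ξ : Ξ) :
    D.fn (D.op T w) ξ = T (D.fn w ξ) := rfl

variable [CompleteSpace H] {A : Type*} [NonUnitalCStarAlgebra A]

/-- the representation -/
def GData.rep (ι : A →⋆ₙₐ[ℂ] (H →L[ℂ] H)) :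
    A →⋆ₙₐ[ℂ] (UniformSpace.Completion (D.Pre H) →L[ℂ] UniformSpace.Completion (D.Pre H)) :=
  completionRep (fun a => D.op (ι a))
    (fun c a w => D.fn_inj (by ext ξ; simp [D.fn_op]))
    (fun a b w => D.fn_inj (by ext ξ; simp [D.fn_op]))
    (fun a b w => D.fn_inj (by ext ξ; simp [D.fn_op]))
    (fun a w w' => by
      simp only [D.inner_def, D.fn_op, map_star, ContinuousLinearMap.star_eq_adjoint,
        ContinuousLinearMap.adjoint_inner_left])

open UniformSpace in
lemma GData.rep_coe (ι : A →⋆ₙₐ[ℂ] (H →L[ℂ] H)) (a : A) (w : D.Pre H) :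
    D.rep ι a (w : Completion (D.Pre H)) = (D.op (ι a) w : D.Pre H) := by
  exact completion_coe_op _ _
end

section
universe u v w
variable {X : Type w} {H : Type v} [NormedAddCommGroup H] [InnerProductSpace ℂ H]
    [CompleteSpace H] {A : Type u} [NonUnitalCStarAlgebra A]

open UniformSpace in
lemma exists_op {Ξ : Type*} (D : GData Ξ) (C : ℝ) (f : Ξ → H →ₗ[ℂ] H)
    (hf : ∀ h, D.P (fun ξ => ‖f ξ h‖ ^ 2) (C * ‖h‖ ^ 2)) (hC : 0 ≤ C) :
    ∃ V : H →L[ℂ] Completion (D.Pre H), ‖V‖ ≤ √C ∧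
      ∀ h, ∃ w : D.Pre H, V h = w ∧ ∀ ξ, D.fn w ξ = f ξ h := by
  let V0 : H →ₗ[ℂ] D.Pre H :=
    { toFun := fun h => D.mk' (fun ξ => f ξ h) ⟨_, _, hf h, fun _ => le_rfl⟩
      map_add' := fun h g => D.fn_inj (by
        rw [map_add (D.fn)]; ext ξ; simp only [Pi.add_apply, D.fn_mk', map_add]; rfl)
      map_smul' := fun c g => D.fn_inj (by
        rw [map_smul (D.fn)]; ext ξ; simp only [Pi.smul_apply, D.fn_mk', map_smul]; rfl) }
  have hV0 : ∀ h, ‖V0 h‖ ≤ √C * ‖h‖ := by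
    intro h
    refine le_of_sq_le_sq ?_ (by positivity)
    rw [mul_pow, Real.sq_sqrt hC]
    exact D.norm_sq_le _ _ _ (hf h) fun ξ => le_rfl
  refine ⟨(Completion.toComplL (𝕜 := ℂ) (E := D.Pre H)) ∘L V0.mkContinuous _ hV0, ?_, fun h => ?_⟩
  · refine ContinuousLinearMap.opNorm_le_bound _ (by positivity) fun h => ?_
    simpa using hV0 h
  · exact ⟨V0 h, rfl, fun ξ => rfl⟩

open UniformSpace in
lemma exists_rep (ι : A →⋆ₙₐ[ℂ] (H →L[ℂ] H))
    (φ : X → X → (A →ₗ[ℂ] (H →L[ℂ] H))) (C : ℝ) (hC : 0 ≤ C) (hS : SchurBound ι φ C) :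
    ∃ R : OpValuedRep.{u, v, w} A H X, (∀ x, ‖R.V x‖ ≤ √C) ∧ (∀ x, ‖R.W x‖ ≤ √C) ∧
      ∀ x y a h g, inner ℂ (R.V x h) (R.ρ a (R.W y g)) = inner ℂ h (φ x y a g) := by
  let Ξ : Type (max u v w) := ULift.{u} ((X → (H →ₗ[ℂ] H)) × (X → (H →ₗ[ℂ] H)))
  let lf : Ξ → X → (H →ₗ[ℂ] H) := fun z => z.down.1
  let rf : Ξ → X → (H →ₗ[ℂ] H) := fun z => z.down.2
  obtain ⟨L, hL1, hL2⟩ := exists_L ι φ C hC hS lf rf (fun ξ η => ⟨⟨(ξ, η)⟩, rfl, rfl⟩)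
  let D : GData Ξ :=
    { P := Dom lf rf C
      L := L
      zero := Dom.zero
      add := fun _ _ _ _ => Dom.add
      smul := fun _ _ r hr h => h.smul r hr
      le := hL2 }
  choose V hV1 hV2 using fun x => exists_op D C (fun z => lf z x) (fun h => Dom.left x h) hC
  choose W hW1 hW2 using fun x => exists_op D C (fun z => rf z x) (fun h => Dom.right x h) hC
  refine ⟨{ K := Completion (D.Pre H), ρ := D.rep ι, V := V, W := W }, hV1, hW1, ?_⟩
  intro x y a h g
  obtain ⟨w, hw1, hw2⟩ := hV2 x h
  obtain ⟨w', hw1', hw2'⟩ := hW2 y g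
  change inner ℂ (V x h) (D.rep ι a (W y g)) = _
  rw [hw1, hw1', D.rep_coe, Completion.inner_coe, D.inner_def]
  simp only [D.fn_op, hw2, hw2']
  apply Complex.ext
  · rw [D.Lc_re]
    exact hL1 x y h g a
  · rw [D.Lc_im]
    have := hL1 x y h g (-Complex.I • a)
    simpa [inner_smul_right] using this
end
end SchurAux

namespace SchurAux

section
universe u v w
variable {X : Type w} {H : Type v} [NormedAddCommGroup H] [InnerProductSpace ℂ H]
    [CompleteSpace H] {A : Type u} [NonUnitalCStarAlgebra A]

lemma exists_compress {K : Type*} [NormedAddCommGroup K] [InnerProductSpace ℂ K]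
    [CompleteSpace K] (ρ : A →⋆ₙₐ[ℂ] (K →L[ℂ] K)) :
    ∃ (N : Submodule ℂ K) (_ : CompleteSpace N) (ρ' : A →⋆ₙₐ[ℂ] (N →L[ℂ] N)) (P : K →L[ℂ] N),
      NondegenerateRep ρ' ∧ ‖P‖ ≤ 1 ∧
      ∀ a v w, inner ℂ (P v) (ρ' a (P w)) = inner ℂ v (ρ a w) := by
  let S : Submodule ℂ K := Submodule.span ℂ {ξ : K | ∃ (a : A) (v : K), ρ a v = ξ}
  let N : Submodule ℂ K := S.topologicalClosure
  haveI hN : CompleteSpace N := S.isClosed_topologicalClosure.completeSpace_coe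
  let P : K →L[ℂ] N := N.orthogonalProjection
  have hmem : ∀ a v, ρ a v ∈ N := fun a v =>
    S.le_topologicalClosure (Submodule.subset_span ⟨a, v, rfl⟩)
  have hP : ∀ n ∈ N, ((P n : N) : K) = n := fun n hn =>
    Submodule.starProjection_eq_self_iff.mpr hn
  have hin : ∀ v (n : N), inner ℂ (P v) n = inner ℂ v (n : K) := fun v n =>
    Submodule.inner_orthogonalProjection_eq_of_mem_right n v
  have hstar : ∀ a v w, inner ℂ (ρ (star a) v) w = inner ℂ v (ρ a w) := fun a v w => by
    rw [map_star, ContinuousLinearMap.star_eq_adjoint, ContinuousLinearMap.adjoint_inner_left]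
  have hker : ∀ a v, ρ a ((P v : N) : K) = ρ a v := by
    intro a v
    refine ext_inner_left ℂ fun w => ?_
    rw [← hstar, ← hstar]
    have h1 := hin v ⟨_, hmem (star a) w⟩
    rw [Submodule.coe_inner] at h1
    rw [← inner_conj_symm, h1, inner_conj_symm]
  let ρ' : A →⋆ₙₐ[ℂ] (N →L[ℂ] N) :=
    { toFun := fun a => P ∘L (ρ a) ∘L N.subtypeL
      map_smul' := fun c a => by ext v; simp
      map_zero' := by ext v; simp
      map_add' := fun a b => by ext v; simp
      map_mul' := fun a b => by
        ext v
        change ((P (ρ (a * b) v) : N) : K) = ((P (ρ a (P (ρ b v) : N)) : N) : K)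
        rw [hker, map_mul]; rfl
      map_star' := fun a => by
        refine (ContinuousLinearMap.eq_adjoint_iff _ _).mpr fun v w => ?_
        change inner ℂ (P (ρ (star a) v)) w = inner ℂ v (P (ρ a w))
        rw [hin, hstar, ← inner_conj_symm v, hin, inner_conj_symm] }
  have hρ' : ∀ a n, ((ρ' a n : N) : K) = ρ a n := fun a n => hP _ (hmem a n)
  refine ⟨N, hN, ρ', P, ?_, ?_, ?_⟩
  · unfold NondegenerateRep
    rw [Submodule.dense_iff_topologicalClosure_eq_top, Submodule.topologicalClosure_eq_top_iff,
      Submodule.eq_bot_iff]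
    intro n hn
    rw [Submodule.mem_orthogonal] at hn
    have h1 : ∀ a v, inner ℂ (ρ a v) (n : K) = 0 := by
      intro a v
      have := hn (ρ' a (P v)) (Submodule.subset_span ⟨a, P v, rfl⟩)
      rw [Submodule.coe_inner, hρ', hker] at this
      exact this
    have h2 : (n : K) ∈ Sᗮ := by
      rw [Submodule.mem_orthogonal]
      intro s hs
      induction hs using Submodule.span_induction with
      | mem x hx => obtain ⟨a, v, rfl⟩ := hx; exact h1 a v
      | zero => simp
      | add x y _ _ hx hy => rw [inner_add_left, hx, hy, add_zero]
      | smul c x _ hx => rw [inner_smul_left, hx, mul_zero]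
    rw [← Submodule.orthogonal_closure] at h2
    have h3 := (Submodule.mem_orthogonal _ _).mp h2 n n.2
    exact Subtype.ext (inner_self_eq_zero.mp h3)
  · exact Submodule.orthogonalProjection_norm_le _
  · intro a v w
    rw [hin, hρ', hker]

lemma exists_rep_nd (ι : A →⋆ₙₐ[ℂ] (H →L[ℂ] H))
    (φ : X → X → (A →ₗ[ℂ] (H →L[ℂ] H))) (C : ℝ) (hC : 0 ≤ C) (hS : SchurBound ι φ C) :
    ∃ R : OpValuedRep.{u, v, w} A H X, NondegenerateRep R.ρ ∧
      (∀ x, ‖R.V x‖ ≤ √C) ∧ (∀ x, ‖R.W x‖ ≤ √C) ∧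
      ∀ (x y : X) (a : A),
          φ x y a = (ContinuousLinearMap.adjoint (R.V x)) ∘L (R.ρ a) ∘L (R.W y) := by
  obtain ⟨R, hV, hW, hR⟩ := exists_rep ι φ C hC hS
  obtain ⟨N, hN, ρ', P, hnd, hP, hPi⟩ := exists_compress R.ρ
  have hn : ∀ T : H →L[ℂ] R.K, ‖T‖ ≤ √C → ‖P ∘L T‖ ≤ √C := fun T hT =>
    (ContinuousLinearMap.opNorm_comp_le P T).trans
      ((mul_le_of_le_one_left (norm_nonneg _) hP).trans hT)
  refine ⟨{ K := N, ρ := ρ', V := fun x => P ∘L R.V x, W := fun x => P ∘L R.W x }, hnd,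
    fun x => hn _ (hV x), fun x => hn _ (hW x), fun x y a => ?_⟩
  ext g
  refine ext_inner_left ℂ fun h => ?_
  rw [← hR, ← hPi]
  change _ = inner ℂ h (ContinuousLinearMap.adjoint (P ∘L R.V x) (ρ' a (P (R.W y g))))
  rw [ContinuousLinearMap.adjoint_inner_right]
  rfl
end

lemma schurBound_schurNorm {X : Type*} {H : Type*} [NormedAddCommGroup H] [InnerProductSpace ℂ H]
    [CompleteSpace H] {A : Type*} [NonUnitalCStarAlgebra A] (ι : A →⋆ₙₐ[ℂ] (H →L[ℂ] H))
    (φ : X → X → (A →ₗ[ℂ] (H →L[ℂ] H))) (h : IsSchurMultiplier ι φ) :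
    0 ≤ schurNorm ι φ ∧ SchurBound ι φ (schurNorm ι φ) := by
  have hne : { C : ℝ | 0 ≤ C ∧ SchurBound ι φ C }.Nonempty := h
  refine ⟨le_csInf hne fun C hC => hC.1, fun n k hk => ?_⟩
  set M := ‖matOp (Matrix.of fun i j => TKer ι (k i j))‖ with hM
  have hM0 : 0 ≤ M := norm_nonneg _
  rcases hM0.eq_or_lt with h0 | h0
  · obtain ⟨C, hC, hS⟩ := h
    have := hS n k hk
    rw [← hM, ← h0, mul_zero] at this
    rwa [← h0, mul_zero]
  · rw [← div_le_iff₀ h0]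
    refine le_csInf hne fun C hC => ?_
    rw [div_le_iff₀ h0]
    exact hC.2 n k hk
end SchurAux

/-- **Theorem 2.1 (Schur `A`-multiplier characterisation).**
Let `X` be a set, `H` a Hilbert space, `A ⊆ B(H)` a non-degenerate C*-algebra
(realised through an isometric non-degenerate *-monomorphism `ι : A → B(H)`), and
`φ : X × X → CB(A, B(H))` a bounded function.  Then `φ` is a Schur `A`-multiplier if and
only if there are a Hilbert space `K`, a non-degenerate *-representation `ρ : A → B(K)`
and bounded functions `V, W : X → B(H,K)` with `φ(x,y)(a) = V(x)* ρ(a) W(y)`; moreover,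
in that case `V` and `W` may be chosen so that
`‖φ‖ₘ = sup_x ‖V(x)‖ ⬝ sup_y ‖W(y)‖`. -/
theorem schur_A_multiplier_iff
    {X : Type*} {H : Type*} [NormedAddCommGroup H] [InnerProductSpace ℂ H]
    [CompleteSpace H] {A : Type*} [NonUnitalCStarAlgebra A]
    (ι : A →⋆ₙₐ[ℂ] (H →L[ℂ] H)) (hisom : ∀ a : A, ‖ι a‖ = ‖a‖)
    (hnd : NondegenerateRep ι)
    (φ : X → X → (A →ₗ[ℂ] (H →L[ℂ] H)))
    (hbdd : ∃ C : ℝ, 0 ≤ C ∧ ∀ x y : X, CBBound (fun a => ι a) (fun T => T) (φ x y) C) :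
    (IsSchurMultiplier ι φ ↔
      ∃ R : OpValuedRep A H X, NondegenerateRep R.ρ ∧
        (∃ C : ℝ, ∀ x : X, ‖R.V x‖ ≤ C) ∧ (∃ C : ℝ, ∀ y : X, ‖R.W y‖ ≤ C) ∧
        ∀ (x y : X) (a : A),
          φ x y a = (ContinuousLinearMap.adjoint (R.V x)) ∘L (R.ρ a) ∘L (R.W y)) ∧
    (IsSchurMultiplier ι φ →
      ∃ R : OpValuedRep A H X, NondegenerateRep R.ρ ∧
        (∃ C : ℝ, ∀ x : X, ‖R.V x‖ ≤ C) ∧ (∃ C : ℝ, ∀ y : X, ‖R.W y‖ ≤ C) ∧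
        (∀ (x y : X) (a : A),
          φ x y a = (ContinuousLinearMap.adjoint (R.V x)) ∘L (R.ρ a) ∘L (R.W y)) ∧
        schurNorm ι φ = (⨆ x : X, ‖R.V x‖) * (⨆ y : X, ‖R.W y‖)) := by
  have fwd : IsSchurMultiplier ι φ →
      ∃ R : OpValuedRep A H X, NondegenerateRep R.ρ ∧
        (∃ C : ℝ, ∀ x : X, ‖R.V x‖ ≤ C) ∧ (∃ C : ℝ, ∀ y : X, ‖R.W y‖ ≤ C) ∧
        (∀ (x y : X) (a : A),
          φ x y a = (ContinuousLinearMap.adjoint (R.V x)) ∘L (R.ρ a) ∘L (R.W y)) ∧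
        schurNorm ι φ = (⨆ x : X, ‖R.V x‖) * (⨆ y : X, ‖R.W y‖) := by
    intro h
    obtain ⟨h0, hS⟩ := SchurAux.schurBound_schurNorm ι φ h
    obtain ⟨R, hnd', hV, hW, hφ⟩ := SchurAux.exists_rep_nd ι φ _ h0 hS
    refine ⟨R, hnd', ⟨_, hV⟩, ⟨_, hW⟩, hφ, le_antisymm ?_ ?_⟩
    · have bV : BddAbove (Set.range fun x => ‖R.V x‖) := ⟨_, by rintro _ ⟨x, rfl⟩; exact hV x⟩
      have bW : BddAbove (Set.range fun x => ‖R.W x‖) := ⟨_, by rintro _ ⟨x, rfl⟩; exact hW x⟩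
      have p1 : 0 ≤ ⨆ x : X, ‖R.V x‖ := Real.iSup_nonneg fun x => norm_nonneg _
      have p2 : 0 ≤ ⨆ x : X, ‖R.W x‖ := Real.iSup_nonneg fun x => norm_nonneg _
      refine csInf_le ⟨0, fun C hC => hC.1⟩ ⟨mul_nonneg p1 p2, ?_⟩
      exact SchurAux.schurBound_of_rep ι hisom φ R.ρ R.V R.W _ _ p1 p2
        (fun x => le_ciSup bV x) (fun x => le_ciSup bW x) hφ
    · have e1 : (⨆ x : X, ‖R.V x‖) ≤ √(schurNorm ι φ) := Real.iSup_le hV (Real.sqrt_nonneg _)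
      have e2 : (⨆ x : X, ‖R.W x‖) ≤ √(schurNorm ι φ) := Real.iSup_le hW (Real.sqrt_nonneg _)
      calc _ ≤ √(schurNorm ι φ) * √(schurNorm ι φ) :=
            mul_le_mul e1 e2 (Real.iSup_nonneg fun x => norm_nonneg _) (Real.sqrt_nonneg _)
        _ = schurNorm ι φ := Real.mul_self_sqrt h0
  refine ⟨⟨fun h => ?_, ?_⟩, fwd⟩
  · obtain ⟨R, h1, h2, h3, h4, -⟩ := fwd h
    exact ⟨R, h1, h2, h3, h4⟩
  · rintro ⟨R, -, ⟨C₁, hV⟩, ⟨C₂, hW⟩, hφ⟩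
    exact ⟨max C₁ 0 * max C₂ 0, by positivity,
      SchurAux.schurBound_of_rep ι hisom φ R.ρ R.V R.W _ _ (le_max_right _ _) (le_max_right _ _)
        (fun x => (hV x).trans (le_max_left _ _)) (fun x => (hW x).trans (le_max_left _ _)) hφ⟩

end
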